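/- For every integer r ≥ 1 there exists a positive integer N such that for all n ≥ N, (-1)^(r-1) Δ^r log p(n) > 0, where Δ is the forward difference operator in n and p is the partition function. -/

import Mathlib

/-!
Cauchy's formula writes `2π p(n)` as the integral of `e^{ns} ∏ (1 - e^{-ks})⁻¹` over a segment of
length `2π` on the line `Re s = σ / 2`, where `σ` is the saddle point `π / √(6 (n - 1/24))`. Where
`|arg s| ≤ π / 3`, the modular transformation of the Dedekind eta function turns the integrand into
an elementary function of `s` up to an exponentially small relative error; on the rest of the
segment the series of `log ∏ (1 - e^{-ks})⁻¹` shows that the integrand is negligible. Pushed to the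
arc `s = σ e^{iθ}`, `|θ| ≤ π / 3`, the elementary integrand has a real exponent, and
`w = sin (θ / 2)` makes the integral Gaussian. Hence `p(n) = M(n - 1/24) (1 + ε)` with `M`
elementary and `ε` smaller than every power of `n`, and `log M(y)` is `C √y - log y` plus a power
series in `y^{-1/2}`.

By the mean value theorem `Δ^r y^α ~ (α)_r y^{α - r}`, where `(α)_r = α (α - 1) ⋯ (α - r + 1)`. So
the term `C √y` dominates, `Δ^r log p(n) ~ C (1/2)_r n^{1/2 - r}`, and the sign of `(1/2)_r` is
`(-1)^{r - 1}`.
-/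

open Asymptotics Complex Filter Metric Set
open scoped fwdDiff Real Topology

section GeneratingFunction

open PowerSeries PowerSeries.WithPiTopology

/-- The generating function `∏ (1 - q ^ k)⁻¹` of the partition numbers. -/
noncomputable def partitionGenFun (q : ℂ) : ℂ := (∏' n : ℕ, (1 - q ^ (n + 1)))⁻¹

lemma mk_card_partition_mul_pentagonalSeries :
    (PowerSeries.mk fun n ↦ (Fintype.card (Nat.Partition n) : ℂ)) * pentagonalSeries ℂ = 1 := by
  have hpartition := Nat.Partition.hasProd_powerSeriesMk_card_restricted ℂ (fun _ ↦ True)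
  simp only [Nat.Partition.restricted, implies_true, Finset.filter_true, Finset.card_univ,
    if_true] at hpartition
  have hfactor (i : ℕ) :
      (∑' j : ℕ, (X : PowerSeries ℂ) ^ ((i + 1) * j)) * (1 - X ^ (i + 1)) = 1 := by
    simp only [pow_mul]
    exact tsum_pow_mul_one_sub_of_constantCoeff_eq_zero (by simp)
  have hprod := hpartition.mul (hasProd_one_sub_X_pow ℂ)
  simp only [hfactor] at hprod
  exact hprod.unique hasProd_one

lemma sum_antidiagonal_card_partition_mul_coeff_pentagonalSeries (q : ℂ) (n : ℕ) :
    ∑ kl ∈ Finset.HasAntidiagonal.antidiagonal n,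
      (Fintype.card (Nat.Partition kl.1) : ℂ) * q ^ kl.1 *
        ((pentagonalSeries ℂ).coeff kl.2 * q ^ kl.2) = if n = 0 then 1 else 0 := by
  have hcoeff := congrArg (PowerSeries.coeff n) mk_card_partition_mul_pentagonalSeries
  rw [PowerSeries.coeff_mul, PowerSeries.coeff_one] at hcoeff
  calc _ = (∑ kl ∈ Finset.HasAntidiagonal.antidiagonal n, (PowerSeries.mk fun n ↦
          (Fintype.card (Nat.Partition n) : ℂ)).coeff kl.1 * (pentagonalSeries ℂ).coeff kl.2) *
        q ^ n := by
        rw [Finset.sum_mul]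
        refine Finset.sum_congr rfl fun kl hkl ↦ ?_
        rw [← Finset.HasAntidiagonal.mem_antidiagonal.1 hkl, pow_add, PowerSeries.coeff_mk]
        ring
    _ = _ := by
        rw [hcoeff]
        split_ifs with h <;> simp [h]

lemma norm_coeff_pentagonalSeries_le_one (n : ℕ) : ‖(pentagonalSeries ℂ).coeff n‖ ≤ 1 := by
  by_cases h : n ∈ Set.range pentagonal
  · obtain ⟨k, rfl⟩ := h
    rw [coeff_pentagonalSeries_pentagonal]
    rcases Int.even_or_odd k with h | h
    · simp [Int.negOnePow_even k h]
    · simp [Int.negOnePow_odd k h]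
  · simp [coeff_pentagonalSeries_eq_zero ℂ h]

lemma summable_norm_coeff_pentagonalSeries_mul_pow {q : ℂ} (hq : ‖q‖ < 1) :
    Summable fun n ↦ ‖(pentagonalSeries ℂ).coeff n * q ^ n‖ := by
  refine Summable.of_nonneg_of_le (fun _ ↦ norm_nonneg _) (fun n ↦ ?_)
    (summable_geometric_of_lt_one (norm_nonneg q) hq)
  rw [norm_mul, norm_pow]
  exact mul_le_of_le_one_left (by positivity) (norm_coeff_pentagonalSeries_le_one n)

lemma hasSum_coeff_pentagonalSeries {q : ℂ} (hq : ‖q‖ < 1) :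
    HasSum (fun k : ℕ ↦ (-1) ^ k * (q ^ pentagonal (-k) - q ^ pentagonal (k + 1)))
      (∑' n, (pentagonalSeries ℂ).coeff n * q ^ n) := by
  have h := (summable_norm_coeff_pentagonalSeries_mul_pow hq).of_norm.hasSum
  rw [← pentagonal_injective.hasSum_iff
    (fun n hn ↦ by simp [coeff_pentagonalSeries_eq_zero ℂ hn]),
    ← neg_injective.hasSum_iff (fun x hx ↦ by absurd hx; use -x; simp)] at h
  convert! h.nat_add_neg_add_one using 2 with k
  have hsign (k : ℕ) : ((k : ℤ).negOnePow : ℤ) = (-1) ^ k := by simp [Int.negOnePow_def]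
  simp only [Function.comp_apply, coeff_pentagonalSeries_pentagonal, neg_neg, Int.negOnePow_neg,
    Int.negOnePow_succ, Units.val_neg, hsign]
  push_cast
  ring

lemma norm_pow_mul_prod_one_sub_pow_le {q : ℂ} (hq : ‖q‖ < 1) (k n : ℕ) :
    ‖q ^ ((k + 1) * n) * ∏ i ∈ Finset.range (n + 1), (1 - q ^ (k + i + 1))‖ ≤
      Real.exp (1 - ‖q‖)⁻¹ * ‖q‖ ^ n := by
  have hpow : ‖q ^ ((k + 1) * n)‖ ≤ ‖q‖ ^ n := by
    rw [norm_pow]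
    exact pow_le_pow_of_le_one (norm_nonneg q) hq.le (by nlinarith)
  have hprod : ‖∏ i ∈ Finset.range (n + 1), (1 - q ^ (k + i + 1))‖ ≤ Real.exp (1 - ‖q‖)⁻¹ :=
    calc _ ≤ ∏ i ∈ Finset.range (n + 1), (1 + ‖q‖ ^ i) := by
          rw [norm_prod]
          refine Finset.prod_le_prod (fun _ _ ↦ norm_nonneg _) (fun i _ ↦ ?_)
          refine (norm_sub_le _ _).trans ?_
          rw [norm_one, norm_pow]
          gcongr 1 + ?_
          exact pow_le_pow_of_le_one (norm_nonneg q) hq.le (by omega)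
      _ ≤ Real.exp (∑ i ∈ Finset.range (n + 1), ‖q‖ ^ i) :=
          Real.prod_one_add_le_exp_sum _ fun _ ↦ by positivity
      _ ≤ _ := by
          rw [Real.exp_le_exp, ← tsum_geometric_of_lt_one (norm_nonneg q) hq]
          exact (summable_geometric_of_lt_one (norm_nonneg q) hq).sum_le_tsum _
            fun _ _ ↦ by positivity
  rw [norm_mul, mul_comm]
  gcongr

lemma tsum_coeff_pentagonalSeries {q : ℂ} (hq : ‖q‖ < 1) :
    ∑' n, (pentagonalSeries ℂ).coeff n * q ^ n = ∏' n : ℕ, (1 - q ^ (n + 1)) := by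
  have hgeom := summable_geometric_of_lt_one (norm_nonneg q) hq
  have hbound := hgeom.mul_left (Real.exp (1 - ‖q‖)⁻¹)
  have hsum := hasSum_coeff_pentagonalSeries hq
  rw [← hsum.tsum_eq]
  refine (Pentagonal.tprod_one_sub_pow (tendsto_pow_atTop_nhds_zero_of_norm_lt_one hq)
    (fun k ↦ .of_norm_bounded hbound (norm_pow_mul_prod_one_sub_pow_le hq k)) (fun k ↦ ?_)
    hsum.summable (squeeze_zero_norm (a := fun k ↦ ‖q‖ ^ k *
      ∑' n : ℕ, Real.exp (1 - ‖q‖)⁻¹ * ‖q‖ ^ n) (fun k ↦ ?_) ?_)).symm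
  · simp_rw [sub_eq_add_neg]
    refine multipliable_one_add_of_summable ?_
    simp only [norm_neg, norm_pow, add_assoc]
    exact (summable_nat_add_iff (k + 1)).2 hgeom
  · rw [norm_mul, norm_mul, norm_pow, norm_neg, norm_one, one_pow, one_mul, norm_pow]
    refine mul_le_mul (pow_le_pow_of_le_one (norm_nonneg _) hq.le ?_)
      (tsum_of_norm_bounded hbound.hasSum (norm_pow_mul_prod_one_sub_pow_le hq k))
      (norm_nonneg _) (by positivity)
    rw [Nat.le_div_iff_mul_le two_pos]
    nlinarith
  · simpa using (tendsto_pow_atTop_nhds_zero_of_lt_one (norm_nonneg q) hq).mul_const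
      (∑' n : ℕ, Real.exp (1 - ‖q‖)⁻¹ * ‖q‖ ^ n)

lemma card_partition_le_two_pow (n : ℕ) : Fintype.card (Nat.Partition n) ≤ 2 ^ n := by
  have h := Fintype.card_le_of_surjective _ (Nat.Partition.ofComposition_surj (n := n))
  rw [composition_card] at h
  exact h.trans (Nat.pow_le_pow_right two_pos n.pred_le)

lemma hasSum_card_partition_mul_pow {q : ℂ} (hq : ‖q‖ < 1 / 2) :
    HasSum (fun n ↦ (Fintype.card (Nat.Partition n) : ℂ) * q ^ n) (partitionGenFun q) := by
  have hq1 : ‖q‖ < 1 := by linarith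
  have hsum : Summable fun n ↦ ‖(Fintype.card (Nat.Partition n) : ℂ) * q ^ n‖ := by
    refine Summable.of_nonneg_of_le (fun _ ↦ norm_nonneg _) (fun n ↦ ?_)
      (summable_geometric_of_lt_one (r := 2 * ‖q‖) (by positivity) (by linarith))
    rw [norm_mul, norm_pow, mul_pow, Complex.norm_natCast]
    gcongr
    exact_mod_cast card_partition_le_two_pow n
  have hmul := tsum_mul_tsum_eq_tsum_sum_antidiagonal_of_summable_norm hsum
    (summable_norm_coeff_pentagonalSeries_mul_pow hq1)
  simp only [sum_antidiagonal_card_partition_mul_coeff_pentagonalSeries, tsum_ite_eq,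
    tsum_coeff_pentagonalSeries hq1] at hmul
  rw [partitionGenFun, ← eq_inv_of_mul_eq_one_left hmul]
  exact hsum.of_norm.hasSum

lemma tprod_one_sub_pow_ne_zero {q : ℂ} (hq : ‖q‖ < 1) : ∏' n : ℕ, (1 - q ^ (n + 1)) ≠ 0 := by
  simp_rw [sub_eq_add_neg]
  refine tprod_one_add_ne_zero_of_summable (fun n h ↦ ?_) ?_
  · have hone : q ^ (n + 1) = 1 := by linear_combination -h
    have hnorm := congrArg norm hone
    rw [norm_pow, norm_one] at hnorm
    exact (pow_lt_one₀ (norm_nonneg q) hq n.succ_ne_zero).ne hnorm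
  · simp only [norm_neg, norm_pow]
    exact (summable_nat_add_iff 1).2 (summable_geometric_of_lt_one (norm_nonneg q) hq)

lemma partitionGenFun_ne_zero {q : ℂ} (hq : ‖q‖ < 1) : partitionGenFun q ≠ 0 :=
  inv_ne_zero (tprod_one_sub_pow_ne_zero hq)

lemma partitionGenFun_zero : partitionGenFun 0 = 1 := by simp [partitionGenFun]

lemma differentiableOn_partitionGenFun : DifferentiableOn ℂ partitionGenFun (ball 0 1) :=
  ModularForm.differentiableOn_tprod_one_sub_pow.inv
    fun _ hq ↦ tprod_one_sub_pow_ne_zero (by simpa using hq)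

lemma hasFPowerSeriesAt_partitionGenFun :
    HasFPowerSeriesAt partitionGenFun
      (.ofScalars ℂ fun n ↦ (Fintype.card (Nat.Partition n) : ℂ)) 0 := by
  rw [hasFPowerSeriesAt_iff]
  filter_upwards [ball_mem_nhds (0 : ℂ) one_half_pos] with q hq
  simpa [mul_comm] using hasSum_card_partition_mul_pow (q := q) (by simpa using hq)

lemma circleIntegral_inv_smul_eq {E : Type*} [NormedAddCommGroup E] [NormedSpace ℂ E]
    (g : ℂ → E) (x : ℝ) :
    (∮ z in C(0, Real.exp (-x)), z⁻¹ • g z) = I • ∫ y in -π..π, g (exp (-(x + y * I))) := by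
  have hcircleMap (y : ℝ) : circleMap 0 (Real.exp (-x)) (-y) = exp (-(x + y * I)) := by
    rw [circleMap, zero_add, ofReal_exp, ← exp_add]
    push_cast
    ring_nf
  have hperiodic : Function.Periodic (fun θ ↦ g (circleMap 0 (Real.exp (-x)) θ)) (2 * π) :=
    (periodic_circleMap _ _).comp g
  have hshift := hperiodic.intervalIntegral_add_eq 0 (-π)
  rw [zero_add, show -π + 2 * π = π by ring] at hshift
  have hintegrand (θ : ℝ) : deriv (circleMap 0 (Real.exp (-x))) θ •
      (circleMap 0 (Real.exp (-x)) θ)⁻¹ • g (circleMap 0 (Real.exp (-x)) θ) =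
        I • g (circleMap 0 (Real.exp (-x)) θ) := by
    rw [deriv_circleMap, smul_smul, mul_right_comm,
      mul_inv_cancel₀ (circleMap_ne_center (Real.exp_ne_zero _)), one_mul]
  simp_rw [circleIntegral, hintegrand, intervalIntegral.integral_smul, hshift, ← hcircleMap]
  rw [intervalIntegral.integral_comp_neg fun y ↦ g (circleMap 0 (Real.exp (-x)) y), neg_neg]

lemma two_pi_mul_coeff_eq_integral {f : ℂ → ℂ} {a : ℕ → ℂ} (hf : DifferentiableOn ℂ f (ball 0 1))
    (ha : HasFPowerSeriesAt f (.ofScalars ℂ a) 0) (n : ℕ) {x : ℝ} (hx : 0 < x) :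
    2 * π * a n = ∫ y in -π..π, f (exp (-(x + y * I))) * exp (n * (x + y * I)) := by
  obtain ⟨R, hR⟩ : ∃ R : NNReal, (R : ℝ) = Real.exp (-x) := ⟨⟨_, (Real.exp_pos _).le⟩, rfl⟩
  have hR1 : (R : ℝ) < 1 := by simpa [hR] using hx
  have hR0 : 0 < R := by rw [← NNReal.coe_pos, hR]; exact Real.exp_pos _
  have hcauchy := ((hf.mono (closedBall_subset_ball hR1)).hasFPowerSeriesOnBall
    hR0).hasFPowerSeriesAt
  have hcoeff := congrArg (fun p ↦ p n fun _ ↦ (1 : ℂ)) (ha.eq_formalMultilinearSeries hcauchy)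
  simp only [cauchyPowerSeries_apply, FormalMultilinearSeries.ofScalars_apply_eq, one_pow,
    smul_eq_mul, mul_one, sub_zero, one_div, mul_left_comm (_ ^ n), hR] at hcoeff
  have hintegral := circleIntegral_inv_smul_eq (fun z ↦ z⁻¹ ^ n * f z) x
  have hpi : (π : ℂ) ≠ 0 := ofReal_ne_zero.2 Real.pi_ne_zero
  simp only [smul_eq_mul] at hintegral
  rw [hcoeff, hintegral, ← mul_assoc (2 * π : ℂ), ← mul_assoc,
    show 2 * (π : ℂ) * (2 * π * I)⁻¹ * I = 1 by field_simp, one_mul]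
  refine intervalIntegral.integral_congr fun y _ ↦ ?_
  simp only [← exp_neg, neg_neg, ← exp_nat_mul, mul_comm]

end GeneratingFunction

section ModularTransformation

lemma eta_eq_div_partitionGenFun (s : ℂ) :
    ModularForm.eta (I * s / (2 * π)) = exp (-s / 24) / partitionGenFun (exp (-s)) := by
  have hpi : (π : ℂ) ≠ 0 := ofReal_ne_zero.2 Real.pi_ne_zero
  rw [ModularForm.eta, partitionGenFun, div_inv_eq_mul, Function.Periodic.qParam]
  congr 2
  · push_cast
    field_simp
    linear_combination s * I_mul_I
  · ext n
    rw [ModularForm.eta_q_eq_pow]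
    congr 3
    field_simp
    linear_combination s * I_mul_I

lemma sqrt_I_mul {w : ℂ} (hw : 0 < w.re) : sqrt (I * w) = sqrt I * w ^ (1 / 2 : ℂ) := by
  have hw0 : w ≠ 0 := by rintro rfl; simp at hw
  have harg := abs_lt.1 (abs_arg_lt_pi_div_two_iff.2 (Or.inl hw))
  have hlog : log (I * w) = log I + log w := by
    refine (log_mul_eq_add_log_iff I_ne_zero hw0).2 ?_
    rw [arg_I]
    constructor <;> linarith [Real.pi_pos]
  rw [sqrt, sqrt, cpow_def_of_ne_zero (mul_ne_zero I_ne_zero hw0), cpow_def_of_ne_zero I_ne_zero,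
    cpow_def_of_ne_zero hw0, hlog, ← exp_add]
  ring_nf

lemma re_inv_pos {s : ℂ} (hs : 0 < s.re) : 0 < (s⁻¹).re := by
  have := normSq_pos.2 (show s ≠ 0 by rintro rfl; simp at hs)
  rw [inv_re]
  positivity

lemma re_four_pi_sq_div (s : ℂ) : (4 * π ^ 2 / s : ℂ).re = 4 * π ^ 2 * (s⁻¹).re := by
  rw [div_eq_mul_inv, ← re_ofReal_mul]
  push_cast
  rfl

lemma norm_exp_neg_lt_one {s : ℂ} (hs : 0 < s.re) : ‖exp (-s)‖ < 1 := by
  simpa [norm_exp] using hs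

lemma eta_mul_I_four_pi_sq_div {s : ℂ} (hs : 0 < s.re) :
    ModularForm.eta (I * (4 * π ^ 2 / s) / (2 * π)) =
      (s / (2 * π)) ^ (1 / 2 : ℂ) * ModularForm.eta (I * s / (2 * π)) := by
  have hpi : (π : ℂ) ≠ 0 := ofReal_ne_zero.2 Real.pi_ne_zero
  have hs0 : s ≠ 0 := by rintro rfl; simp at hs
  have hre : 0 < (s / (2 * π)).re := by
    rw [show s / (2 * π) = s / ((2 * π : ℝ) : ℂ) by push_cast; rfl, div_ofReal_re]
    positivity
  have him : 0 < (I * s / (2 * π)).im := by rwa [mul_div_assoc, I_mul_im]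
  have h := ModularForm.eta_comp_eq_csqrt_I_inv him
  simp only [Function.comp_apply, Pi.smul_apply, Pi.mul_apply, smul_eq_mul] at h
  have hinv : -1 / (I * s / (2 * π)) = I * (4 * π ^ 2 / s) / (2 * π) := by
    field_simp
    linear_combination -4 * I_mul_I
  have hsqrtI : sqrt I ≠ 0 := by simp [sqrt]
  rw [hinv, show sqrt (I * s / (2 * π)) = sqrt I * (s / (2 * π)) ^ (1 / 2 : ℂ) by
    rw [mul_div_assoc, sqrt_I_mul hre]] at h
  rw [h, mul_assoc, inv_mul_cancel_left₀ hsqrtI]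

lemma partitionGenFun_exp_neg {s : ℂ} (hs : 0 < s.re) :
    partitionGenFun (exp (-s)) = (s / (2 * π)) ^ (1 / 2 : ℂ) *
      exp (π ^ 2 / 6 / s - s / 24) * partitionGenFun (exp (-(4 * π ^ 2 / s))) := by
  have hs0 : s ≠ 0 := by rintro rfl; simp at hs
  have hne := partitionGenFun_ne_zero (norm_exp_neg_lt_one hs)
  have hne' : partitionGenFun (exp (-(4 * π ^ 2 / s))) ≠ 0 := by
    refine partitionGenFun_ne_zero (norm_exp_neg_lt_one ?_)
    have := re_inv_pos hs
    rw [re_four_pi_sq_div]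
    positivity
  have hexp : exp (π ^ 2 / 6 / s - s / 24) * exp (-(4 * π ^ 2 / s) / 24) = exp (-s / 24) := by
    rw [← exp_add]
    congr 1
    field_simp
    ring
  have h := eta_mul_I_four_pi_sq_div hs
  rw [eta_eq_div_partitionGenFun, eta_eq_div_partitionGenFun, mul_div_assoc',
    div_eq_div_iff hne' hne, ← hexp] at h
  exact mul_left_cancel₀ (exp_ne_zero (-(4 * π ^ 2 / s) / 24)) (by linear_combination h)

end ModularTransformation

section Bounds

lemma norm_natCast_add_one (m : ℕ) : ‖(m : ℂ) + 1‖ = m + 1 := by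
  exact_mod_cast Complex.norm_natCast (m + 1)

lemma summable_pow_mul_div {q : ℂ} (hq : ‖q‖ < 1) :
    Summable fun x : ℕ × ℕ ↦ (q ^ (x.1 + 1)) ^ (x.2 + 1) / ((x.2 : ℂ) + 1) := by
  have hgeom := summable_geometric_of_lt_one (norm_nonneg q) hq
  refine .of_norm_bounded
    (hgeom.mul_of_nonneg hgeom (fun _ ↦ by positivity) (fun _ ↦ by positivity)) ?_
  rintro ⟨k, m⟩
  rw [norm_div, norm_pow, norm_pow, norm_natCast_add_one, ← pow_mul, ← pow_add]
  calc ‖q‖ ^ ((k + 1) * (m + 1)) / ((m : ℝ) + 1) ≤ ‖q‖ ^ ((k + 1) * (m + 1)) :=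
        div_le_self (by positivity) (by linarith [m.cast_nonneg (α := ℝ)])
    _ ≤ ‖q‖ ^ (k + m) := pow_le_pow_of_le_one (norm_nonneg q) hq.le (by nlinarith)

lemma partitionGenFun_eq_exp {q : ℂ} (hq : ‖q‖ < 1) :
    partitionGenFun q = exp (∑' m : ℕ, q ^ (m + 1) / (1 - q ^ (m + 1)) / ((m : ℂ) + 1)) := by
  have hpow (k : ℕ) : ‖q ^ (k + 1)‖ < 1 := by
    rw [norm_pow]
    exact pow_lt_one₀ (norm_nonneg q) hq k.succ_ne_zero
  have hlog (k : ℕ) :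
      ∑' m : ℕ, (q ^ (k + 1)) ^ (m + 1) / ((m : ℂ) + 1) = -log (1 - q ^ (k + 1)) := by
    simpa using ((hasSum_nat_add_iff' 1).2 (hasSum_taylorSeries_neg_log (hpow k))).tsum_eq
  have hgeom (m : ℕ) : ∑' k : ℕ, (q ^ (k + 1)) ^ (m + 1) / ((m : ℂ) + 1) =
      q ^ (m + 1) / (1 - q ^ (m + 1)) / ((m : ℂ) + 1) := by
    have hterm (k : ℕ) : (q ^ (k + 1)) ^ (m + 1) / ((m : ℂ) + 1) =
        q ^ (m + 1) / ((m : ℂ) + 1) * (q ^ (m + 1)) ^ k := by ring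
    simp_rw [hterm]
    rw [tsum_mul_left, tsum_geometric_of_norm_lt_one (hpow m)]
    ring
  have hsum := summable_pow_mul_div hq
  have hcomm := Summable.tsum_comm (f := fun k m : ℕ ↦
    (q ^ (k + 1)) ^ (m + 1) / ((m : ℂ) + 1)) hsum
  simp_rw [hlog, hgeom] at hcomm
  rw [hcomm, tsum_neg, exp_neg, cexp_tsum_eq_tprod, partitionGenFun]
  · refine fun k h ↦ (hpow k).ne ?_
    rw [← sub_eq_zero.1 h, norm_one]
  · have := hsum.prod
    simp_rw [hlog] at this
    simpa using this.neg

lemma norm_pow_div_one_sub_pow_le {s : ℂ} (hs : 0 < s.re) (m : ℕ) :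
    ‖exp (-s) ^ (m + 1) / (1 - exp (-s) ^ (m + 1)) / ((m : ℂ) + 1)‖ ≤
      1 / ((m : ℝ) + 1) ^ 2 / s.re := by
  set t : ℝ := (m + 1) * s.re with ht
  have htpos : 0 < t := by positivity
  have hnorm : ‖exp (-s) ^ (m + 1)‖ = Real.exp (-t) := by
    rw [norm_pow, norm_exp, ← Real.exp_nat_mul]
    simp [ht]
  have hlt : Real.exp (-t) < 1 := by simpa using htpos
  have hsub : 1 - Real.exp (-t) ≤ ‖1 - exp (-s) ^ (m + 1)‖ := by
    simpa only [hnorm, norm_one] using norm_sub_norm_le 1 (exp (-s) ^ (m + 1))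
  have hdiv : Real.exp (-t) / ‖1 - exp (-s) ^ (m + 1)‖ ≤ 1 / t := by
    rw [div_le_div_iff₀ (by linarith) htpos]
    have hinv : Real.exp (-t) * Real.exp t = 1 := by rw [← Real.exp_add]; simp
    nlinarith [Real.add_one_le_exp t, Real.exp_pos (-t)]
  rw [norm_div, norm_div, hnorm, norm_natCast_add_one]
  calc _ ≤ 1 / t / ((m : ℝ) + 1) := by gcongr
    _ = _ := by rw [ht]; field_simp

-- Keeping the first term of the logarithm exact improves the bound `π ^ 2 / (6 * s.re)` of the
-- real axis wherever `‖1 - exp (-s)‖` is larger than `s.re`.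
lemma norm_partitionGenFun_exp_neg_le {s : ℂ} (hs : 0 < s.re) :
    ‖partitionGenFun (exp (-s))‖ ≤ Real.exp (1 / ‖1 - exp (-s)‖ + (π ^ 2 / 6 - 1) / s.re) := by
  rw [partitionGenFun_eq_exp (norm_exp_neg_lt_one hs)]
  refine (norm_exp_le_exp_norm _).trans (Real.exp_le_exp.2 ?_)
  have hzeta : HasSum (fun m : ℕ ↦ 1 / ((m : ℝ) + 1) ^ 2) (π ^ 2 / 6) := by
    simpa using (hasSum_nat_add_iff' 1).2 hasSum_zeta_two
  have htail : HasSum (fun m : ℕ ↦ 1 / (((m + 1 : ℕ) : ℝ) + 1) ^ 2 / s.re)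
      ((π ^ 2 / 6 - 1) / s.re) := by
    simpa using ((hasSum_nat_add_iff' 1).2 hzeta).div_const s.re
  have hsum := Summable.of_norm_bounded (hzeta.summable.div_const s.re)
    (norm_pow_div_one_sub_pow_le hs)
  rw [hsum.tsum_eq_zero_add]
  refine (norm_add_le _ _).trans (add_le_add ?_ ?_)
  · simp only [zero_add, pow_one, Nat.cast_zero, div_one]
    rw [norm_div]
    gcongr
    exact (norm_exp_neg_lt_one hs).le
  · exact tsum_of_norm_bounded htail fun m ↦ norm_pow_div_one_sub_pow_le hs (m + 1)

lemma exists_norm_partitionGenFun_sub_one_le {ρ : ℝ} (hρ : ρ < 1) :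
    ∃ C, ∀ q : ℂ, ‖q‖ ≤ ρ → ‖partitionGenFun q - 1‖ ≤ C * ‖q‖ := by
  have hball : ball (0 : ℂ) 1 ∈ 𝓝 0 := ball_mem_nhds 0 one_pos
  have hslope : ContinuousOn (dslope partitionGenFun 0) (ball 0 1) :=
    (continuousOn_dslope hball).2 ⟨differentiableOn_partitionGenFun.continuousOn,
      differentiableOn_partitionGenFun.differentiableAt hball⟩
  obtain ⟨C, hC⟩ := (isCompact_closedBall (0 : ℂ) ρ).exists_bound_of_continuousOn
    (hslope.mono (closedBall_subset_ball hρ))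
  refine ⟨C, fun q hq ↦ ?_⟩
  have h := sub_smul_dslope partitionGenFun 0 q
  rw [sub_zero, partitionGenFun_zero, smul_eq_mul] at h
  rw [← h, norm_mul, mul_comm]
  gcongr
  exact hC q (by simpa using hq)

end Bounds

section CircleMethod

/-- The integrand of Cauchy's formula for the `n`-th partition number, in the variable `s` with
`q = exp (-s)`. -/
noncomputable def circleIntegrand (n : ℕ) (s : ℂ) : ℂ := partitionGenFun (exp (-s)) * exp (n * s)

/-- The leading part of `circleIntegrand` near `s = 0`, with saddle point at `√(A / N)`. For the
partition numbers `A = π ^ 2 / 6` and `N = n - 1 / 24`. -/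
noncomputable def saddleIntegrand (A N : ℝ) (s : ℂ) : ℂ :=
  (s / (2 * π)) ^ (1 / 2 : ℂ) * exp (A / s + N * s)

lemma two_pi_mul_card_partition_eq_integral (n : ℕ) {x : ℝ} (hx : 0 < x) :
    2 * π * (Fintype.card (Nat.Partition n) : ℂ) =
      ∫ y in -π..π, circleIntegrand n (x + y * I) :=
  two_pi_mul_coeff_eq_integral differentiableOn_partitionGenFun
    hasFPowerSeriesAt_partitionGenFun n hx

lemma continuousOn_circleIntegrand (n : ℕ) : ContinuousOn (circleIntegrand n) {s | 0 < s.re} :=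
  (differentiableOn_partitionGenFun.continuousOn.comp (by fun_prop)
    fun _ hs ↦ by simpa using norm_exp_neg_lt_one hs).mul (by fun_prop)

lemma differentiableOn_saddleIntegrand (A N : ℝ) :
    DifferentiableOn ℂ (saddleIntegrand A N) {s | 0 < s.re} := by
  intro s hs
  have hs0 : s ≠ 0 := by rintro rfl; simp at hs
  have hslit : s / (2 * π) ∈ slitPlane := by
    left
    rw [show (2 * π : ℂ) = ((2 * π : ℝ) : ℂ) by push_cast; rfl, div_ofReal_re]
    have : 0 < s.re := hs
    positivity
  refine DifferentiableAt.differentiableWithinAt (.mul ?_ ?_)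
  · exact (differentiableAt_id.div_const _).cpow_const hslit
  · exact (((differentiableAt_const _).div differentiableAt_id hs0).add (by fun_prop)).cexp

lemma continuous_comp_add_mul_I {f : ℂ → ℂ} (hf : ContinuousOn f {s | 0 < s.re}) {x : ℝ}
    (hx : 0 < x) : Continuous fun y : ℝ ↦ f (x + y * I) :=
  hf.comp_continuous (by fun_prop) fun y ↦ by simpa using hx

lemma norm_le_one_of_one_le_re_inv {s : ℂ} (hs : 1 ≤ (s⁻¹).re) : ‖s‖ ≤ 1 := by
  have h := hs.trans (re_le_norm _)
  rw [norm_inv] at h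
  exact (one_le_inv_iff₀.1 h).2

lemma re_pos_of_re_inv_pos {s : ℂ} (hs : 0 < (s⁻¹).re) : 0 < s.re := by
  simpa using re_inv_pos hs

lemma norm_saddleIntegrand_le {s : ℂ} (hs : ‖s‖ ≤ 1) (A N : ℝ) :
    ‖saddleIntegrand A N s‖ ≤ Real.exp (A * (s⁻¹).re + N * s.re) := by
  have hnorm : ‖s / (2 * π)‖ ≤ 1 := by
    have : ‖(2 * π : ℂ)‖ = 2 * π := by simp [abs_of_pos Real.pi_pos]
    rw [norm_div, this, div_le_one (by positivity)]
    linarith [Real.pi_gt_three]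
  have hroot : ‖(s / (2 * π)) ^ (1 / 2 : ℂ)‖ ≤ 1 := by
    rw [show (1 / 2 : ℂ) = ((1 / 2 : ℝ) : ℂ) by push_cast; rfl, norm_cpow_real]
    exact Real.rpow_le_one (norm_nonneg _) hnorm one_half_pos.le
  rw [saddleIntegrand, norm_mul, norm_exp, add_re, div_eq_mul_inv (A : ℂ), re_ofReal_mul,
    re_ofReal_mul]
  exact mul_le_of_le_one_left (Real.exp_pos _).le hroot

lemma circleIntegrand_eq_saddleIntegrand_mul (n : ℕ) {s : ℂ} (hs : 0 < s.re) :
    circleIntegrand n s = saddleIntegrand (π ^ 2 / 6) (n - 1 / 24) s *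
      partitionGenFun (exp (-(4 * π ^ 2 / s))) := by
  have hexp : exp ((π ^ 2 / 6 : ℝ) / s + (n - 1 / 24 : ℝ) * s) =
      exp (π ^ 2 / 6 / s - s / 24) * exp (n * s) := by
    rw [← exp_add]
    push_cast
    ring_nf
  rw [circleIntegrand, saddleIntegrand, partitionGenFun_exp_neg hs, hexp]
  ring

lemma exists_norm_circleIntegrand_sub_saddleIntegrand_le :
    ∃ C, ∀ (n : ℕ) (s : ℂ), 1 ≤ (s⁻¹).re →
      ‖circleIntegrand n s - saddleIntegrand (π ^ 2 / 6) (n - 1 / 24) s‖ ≤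
        C * Real.exp ((n - 1 / 24) * s.re) := by
  obtain ⟨C, hC⟩ := exists_norm_partitionGenFun_sub_one_le
    (ρ := Real.exp (-(4 * π ^ 2))) (by simp [Real.pi_pos])
  refine ⟨C, fun n s hs ↦ ?_⟩
  have hre : 0 < s.re := re_pos_of_re_inv_pos (by linarith)
  have hq : ‖exp (-(4 * π ^ 2 / s))‖ = Real.exp (-(4 * π ^ 2 * (s⁻¹).re)) := by
    rw [norm_exp, neg_re, re_four_pi_sq_div]
  have hP := hC (exp (-(4 * π ^ 2 / s))) <| by
    rw [hq, Real.exp_le_exp]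
    nlinarith [sq_pos_of_pos Real.pi_pos]
  rw [hq] at hP
  have hC0 : 0 ≤ C := nonneg_of_mul_nonneg_left ((norm_nonneg _).trans hP) (Real.exp_pos _)
  rw [circleIntegrand_eq_saddleIntegrand_mul n hre, ← mul_sub_one, norm_mul]
  calc _ ≤ Real.exp (π ^ 2 / 6 * (s⁻¹).re + (n - 1 / 24) * s.re) *
        (C * Real.exp (-(4 * π ^ 2 * (s⁻¹).re))) := by
        gcongr
        exact norm_saddleIntegrand_le (norm_le_one_of_one_le_re_inv hs) _ _
    _ = C * Real.exp ((n - 1 / 24) * s.re - 23 / 6 * π ^ 2 * (s⁻¹).re) := by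
        rw [mul_left_comm, ← Real.exp_add]
        ring_nf
    _ ≤ _ := by
        gcongr
        have : 0 ≤ 23 / 6 * π ^ 2 * (s⁻¹).re := by positivity
        linarith

lemma norm_one_sub_exp_neg_sq (x y : ℝ) :
    ‖1 - exp (-(x + y * I))‖ ^ 2 = 1 - 2 * Real.exp (-x) * Real.cos y + Real.exp (-x) ^ 2 := by
  have h : exp (-(x + y * I)) = (Real.exp (-x) : ℂ) * exp ((-y : ℝ) * I) := by
    rw [ofReal_exp, ← exp_add]
    push_cast
    ring_nf
  rw [h, ← normSq_eq_norm_sq, normSq_apply, exp_mul_I, ← ofReal_cos, ← ofReal_sin]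
  simp only [sub_re, one_re, re_ofReal_mul, add_re, ofReal_re, mul_I_re, ofReal_im, sub_im, one_im,
    im_ofReal_mul, add_im, mul_I_im, Real.cos_neg, Real.sin_neg, neg_zero, add_zero, zero_add,
    zero_sub]
  linear_combination Real.exp (-x) ^ 2 * Real.sin_sq_add_cos_sq y

lemma norm_one_sub_exp_neg_le_of_abs_le (x : ℝ) {y y' : ℝ} (h : |y| ≤ |y'|) (hy' : |y'| ≤ π) :
    ‖1 - exp (-(x + y * I))‖ ≤ ‖1 - exp (-(x + y' * I))‖ := by
  have hcos : Real.cos y' ≤ Real.cos y := by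
    rw [← Real.cos_abs y, ← Real.cos_abs y']
    exact Real.cos_le_cos_of_nonneg_of_le_pi (abs_nonneg y) hy' h
  refine (sq_le_sq₀ (norm_nonneg _) (norm_nonneg _)).1 ?_
  rw [norm_one_sub_exp_neg_sq, norm_one_sub_exp_neg_sq]
  nlinarith [Real.exp_pos (-x)]

lemma norm_sub_norm_sq_le_norm_one_sub_exp {w : ℂ} (hw : ‖w‖ ≤ 1) :
    ‖w‖ - ‖w‖ ^ 2 ≤ ‖1 - exp w‖ := by
  have htri : ‖w‖ ≤ ‖exp w - 1 - w‖ + ‖1 - exp w‖ := by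
    calc ‖w‖ = ‖-(exp w - 1 - w) - (1 - exp w)‖ := by congr 1; ring
      _ ≤ _ := by simpa only [norm_neg] using norm_sub_le (-(exp w - 1 - w)) (1 - exp w)
  linarith [norm_exp_sub_one_sub_id_le hw]

lemma norm_add_sqrt_three_mul_I {x : ℝ} (hx : 0 ≤ x) : ‖(x + (√3 * x : ℝ) * I : ℂ)‖ = 2 * x := by
  rw [norm_add_mul_I, mul_pow, Real.sq_sqrt (by norm_num)]
  rw [show x ^ 2 + 3 * x ^ 2 = (2 * x) ^ 2 by ring, Real.sqrt_sq (by positivity)]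

lemma one_div_norm_one_sub_exp_neg_le {x y : ℝ} (hx : 0 < x) (hx1 : x ≤ 1 / 4)
    (hy : √3 * x ≤ |y|) (hy' : |y| ≤ π) :
    1 / ‖1 - exp (-(x + y * I))‖ ≤ 1 / (2 * x) + 2 := by
  have hnorm : ‖-(x + (√3 * x : ℝ) * I : ℂ)‖ = 2 * x := by
    rw [norm_neg, norm_add_sqrt_three_mul_I hx.le]
  have hcorner := norm_sub_norm_sq_le_norm_one_sub_exp
    (w := -(x + (√3 * x : ℝ) * I)) (by rw [hnorm]; linarith)
  rw [hnorm] at hcorner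
  have hle := hcorner.trans (norm_one_sub_exp_neg_le_of_abs_le x
    (by rwa [abs_of_nonneg (by positivity : 0 ≤ √3 * x)]) hy')
  have hpos : 0 < 2 * x - (2 * x) ^ 2 := by nlinarith
  calc _ ≤ 1 / (2 * x - (2 * x) ^ 2) := one_div_le_one_div_of_le hpos hle
    _ ≤ _ := by
      rw [div_le_iff₀ hpos]
      field_simp
      nlinarith

lemma norm_circleIntegrand_le (n : ℕ) {x y : ℝ} (hx : 0 < x) (hx1 : x ≤ 1 / 4)
    (hy : √3 * x ≤ |y|) (hy' : |y| ≤ π) :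
    ‖circleIntegrand n (x + y * I)‖ ≤ Real.exp ((π ^ 2 / 6 - 1 / 2) / x + 2 + n * x) := by
  have hre : (x + y * I : ℂ).re = x := by simp
  have hgen := norm_partitionGenFun_exp_neg_le (s := x + y * I) (by rwa [hre])
  rw [hre] at hgen
  rw [circleIntegrand, norm_mul, norm_exp (n * (x + y * I)), ← ofReal_natCast, re_ofReal_mul, hre,
    Real.exp_add]
  gcongr
  refine hgen.trans (Real.exp_le_exp.2 ?_)
  calc _ ≤ 1 / (2 * x) + 2 + (π ^ 2 / 6 - 1) / x := by
        gcongr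
        exact one_div_norm_one_sub_exp_neg_le hx hx1 hy hy'
    _ = _ := by field_simp; ring

lemma norm_integral_sub_integral_le {E : Type*} [NormedAddCommGroup E] [NormedSpace ℝ E]
    {P F : ℝ → E} (hP : Continuous P) (hF : Continuous F) {b c E₁ E₂ : ℝ} (hb : 0 ≤ b)
    (hbc : b ≤ c) (hP_le : ∀ y, b ≤ |y| → |y| ≤ c → ‖P y‖ ≤ E₁)
    (hPF_le : ∀ y, |y| ≤ b → ‖P y - F y‖ ≤ E₂) :
    ‖(∫ y in -c..c, P y) - ∫ y in -b..b, F y‖ ≤ 2 * (c - b) * E₁ + 2 * b * E₂ := by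
  have hPi (u v : ℝ) := hP.intervalIntegrable (μ := MeasureTheory.volume) u v
  have hFi (u v : ℝ) := hF.intervalIntegrable (μ := MeasureTheory.volume) u v
  have hsplit : (∫ y in -c..c, P y) - ∫ y in -b..b, F y =
      (∫ y in -c..-b, P y) + (∫ y in b..c, P y) + ∫ y in -b..b, (P y - F y) := by
    rw [intervalIntegral.integral_sub (hPi _ _) (hFi _ _),
      ← intervalIntegral.integral_add_adjacent_intervals (hPi (-c) (-b)) (hPi (-b) c),
      ← intervalIntegral.integral_add_adjacent_intervals (hPi (-b) b) (hPi b c)]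
    abel
  have hleft : ‖∫ y in -c..-b, P y‖ ≤ E₁ * |-b - -c| := by
    refine intervalIntegral.norm_integral_le_of_norm_le_const fun y hy ↦ ?_
    rw [uIoc_of_le (by linarith), mem_Ioc] at hy
    have : |y| = -y := abs_of_nonpos (by linarith)
    exact hP_le y (by linarith) (by linarith)
  have hright : ‖∫ y in b..c, P y‖ ≤ E₁ * |c - b| := by
    refine intervalIntegral.norm_integral_le_of_norm_le_const fun y hy ↦ ?_
    rw [uIoc_of_le hbc, mem_Ioc] at hy
    have : |y| = y := abs_of_nonneg (by linarith)
    exact hP_le y (by linarith) (by linarith)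
  have hcenter : ‖∫ y in -b..b, (P y - F y)‖ ≤ E₂ * |b - -b| := by
    refine intervalIntegral.norm_integral_le_of_norm_le_const fun y hy ↦ ?_
    rw [uIoc_of_le (by linarith)] at hy
    exact hPF_le y (abs_le.2 ⟨hy.1.le, hy.2⟩)
  rw [abs_of_nonneg (by linarith)] at hleft hright hcenter
  rw [hsplit]
  exact norm_add₃_le.trans (by linarith)

lemma one_le_re_inv_of_abs_le {x y : ℝ} (hx : 0 < x) (hx1 : x ≤ 1 / 4) (hy : |y| ≤ √3 * x) :
    1 ≤ ((x + y * I : ℂ)⁻¹).re := by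
  have hy2 : y ^ 2 ≤ 3 * x ^ 2 := by
    calc y ^ 2 ≤ (√3 * x) ^ 2 := sq_le_sq.2 (by rwa [abs_of_nonneg (by positivity : 0 ≤ √3 * x)])
      _ = _ := by rw [mul_pow, Real.sq_sqrt (by norm_num)]
  rw [inv_re, normSq_add_mul_I, add_re, ofReal_re, mul_I_re, ofReal_im, neg_zero, add_zero,
    one_le_div (by positivity)]
  nlinarith

-- The main term has size `exp (2 * ((n - 1 / 24) * σ))`; all that matters is `19 / 10 < 2`.
lemma norm_circleIntegrand_le_of_saddle {n : ℕ} {σ y : ℝ} (hσ : 0 < σ) (hσ1 : σ ≤ 1 / 2)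
    (hn : (n - 1 / 24) * σ ^ 2 = π ^ 2 / 6) (hy : √3 * (σ / 2) ≤ |y|) (hy' : |y| ≤ π) :
    ‖circleIntegrand n ((σ / 2 : ℝ) + y * I)‖ ≤
      Real.exp 3 * Real.exp (19 / 10 * ((n - 1 / 24) * σ)) := by
  have hpi : π ^ 2 < 10 := by nlinarith [Real.pi_lt_d2, Real.pi_pos]
  have hL : (n - 1 / 24) * σ = π ^ 2 / 6 / σ := by
    field_simp
    linear_combination 144 * hn
  have hinv : 3 / 5 * ((n - 1 / 24) * σ) ≤ 1 / σ := by
    rw [hL, ← mul_div_assoc]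
    gcongr
    linarith
  have hexponent : (π ^ 2 / 6 - 1 / 2) / (σ / 2) = 2 * ((n - 1 / 24) * σ) - 1 / σ := by
    rw [hL]
    field_simp
  refine (norm_circleIntegrand_le n (half_pos hσ) (by linarith) hy hy').trans ?_
  rw [← Real.exp_add, Real.exp_le_exp]
  linarith [show (n : ℝ) * (σ / 2) = (n - 1 / 24) * σ / 2 + σ / 48 by ring]

lemma exists_norm_card_partition_sub_integral_le :
    ∃ C, ∀ (n : ℕ) (σ : ℝ), 0 < σ → σ ≤ 1 / 2 → (n - 1 / 24) * σ ^ 2 = π ^ 2 / 6 →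
      ‖2 * π * (Fintype.card (Nat.Partition n) : ℂ) - ∫ y in -(√3 * (σ / 2))..√3 * (σ / 2),
          saddleIntegrand (π ^ 2 / 6) (n - 1 / 24) ((σ / 2 : ℝ) + y * I)‖ ≤
        C * Real.exp (19 / 10 * ((n - 1 / 24) * σ)) := by
  obtain ⟨C, hC⟩ := exists_norm_circleIntegrand_sub_saddleIntegrand_le
  refine ⟨2 * π * Real.exp 3 + |C|, fun n σ hσ hσ1 hn ↦ ?_⟩
  have hL : 0 ≤ (n - 1 / 24) * σ := by
    refine (pos_of_mul_pos_left (b := σ) ?_ hσ.le).le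
    rw [mul_assoc, ← sq, hn]
    positivity
  have hb : √3 * (σ / 2) ≤ 1 / 2 := by
    have : √3 ≤ 2 := (Real.sqrt_le_left two_pos.le).2 (by norm_num)
    nlinarith
  have hmajor (y : ℝ) (hy : |y| ≤ √3 * (σ / 2)) :
      ‖circleIntegrand n ((σ / 2 : ℝ) + y * I) -
        saddleIntegrand (π ^ 2 / 6) (n - 1 / 24) ((σ / 2 : ℝ) + y * I)‖ ≤
        |C| * Real.exp (19 / 10 * ((n - 1 / 24) * σ)) := by
    refine (hC n _ (one_le_re_inv_of_abs_le (half_pos hσ) (by linarith) hy)).trans ?_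
    gcongr ?_ * Real.exp ?_
    · exact le_abs_self C
    · rw [add_re, ofReal_re, mul_I_re, ofReal_im, neg_zero, add_zero]
      linarith
  rw [two_pi_mul_card_partition_eq_integral n (half_pos hσ)]
  refine (norm_integral_sub_integral_le
    (continuous_comp_add_mul_I (continuousOn_circleIntegrand n) (half_pos hσ))
    (continuous_comp_add_mul_I (differentiableOn_saddleIntegrand _ _).continuousOn (half_pos hσ))
    (by positivity) (by linarith [Real.pi_gt_three])
    (fun y ↦ norm_circleIntegrand_le_of_saddle hσ hσ1 hn) hmajor).trans ?_
  rw [add_mul, mul_assoc (2 * π), ← mul_assoc (2 * (√3 * (σ / 2)))]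
  gcongr
  · exact sub_le_self _ (by positivity)
  · exact mul_le_of_le_one_left (abs_nonneg C) (by linarith)

end CircleMethod

section SaddlePoint

lemma ofReal_mul_cpow_half {r : ℝ} (hr : 0 < r) {z : ℂ} (hz : z ≠ 0) :
    ((r : ℂ) * z) ^ (1 / 2 : ℂ) = (√r : ℝ) * z ^ (1 / 2 : ℂ) := by
  have hr' : (r : ℂ) ≠ 0 := ofReal_ne_zero.2 hr.ne'
  rw [cpow_def_of_ne_zero (mul_ne_zero hr' hz), cpow_def_of_ne_zero hz, log_ofReal_mul hr hz,
    Real.sqrt_eq_rpow, Real.rpow_def_of_pos hr, add_mul, exp_add]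
  push_cast
  rfl

lemma integral_comp_mul_deriv_eq_sub {f g : ℂ → ℂ} {U : Set ℂ}
    (hg : ∀ z ∈ U, HasDerivAt g (f z) z) (hf : ContinuousOn f U) {γ γ' : ℝ → ℂ} {a b : ℝ}
    (hγ : ∀ t, HasDerivAt γ (γ' t) t) (hγ' : Continuous γ') (hmaps : MapsTo γ (uIcc a b) U) :
    ∫ t in a..b, f (γ t) * γ' t = g (γ b) - g (γ a) := by
  have hγcont : Continuous γ := continuous_iff_continuousAt.2 fun t ↦ (hγ t).continuousAt
  refine intervalIntegral.integral_eq_sub_of_hasDerivAt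
    (fun t ht ↦ (hg _ (hmaps ht)).comp t (hγ t)) ?_
  exact ((hf.comp hγcont.continuousOn hmaps).mul hγ'.continuousOn).intervalIntegrable

lemma mem_ball_two_mul {σ : ℝ} (hσ : 0 < σ) {z : ℂ} (hnorm : ‖z‖ ≤ σ) (hre : σ / 2 ≤ z.re) :
    z ∈ ball (2 * σ : ℂ) (2 * σ) := by
  have hsq : z.re * z.re + z.im * z.im ≤ σ ^ 2 := by
    rw [← normSq_apply, normSq_eq_norm_sq]
    gcongr
  rw [mem_ball_iff_norm, ← sq_lt_sq₀ (norm_nonneg _) (by positivity), ← normSq_eq_norm_sq,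
    normSq_apply]
  simp only [sub_re, mul_re, re_ofNat, ofReal_re, im_ofNat, ofReal_im, sub_im, mul_im]
  nlinarith

lemma add_mul_I_mem_ball {σ y : ℝ} (hσ : 0 < σ)
    (hy : y ∈ uIcc (-(√3 * (σ / 2))) (√3 * (σ / 2))) :
    ((σ / 2 : ℝ) + y * I : ℂ) ∈ ball (2 * σ : ℂ) (2 * σ) := by
  rw [uIcc_of_le (by linarith [show 0 ≤ √3 * (σ / 2) by positivity])] at hy
  have hy_sq : y ^ 2 ≤ (√3 * (σ / 2)) ^ 2 := sq_le_sq' hy.1 hy.2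
  rw [mul_pow, Real.sq_sqrt (by norm_num)] at hy_sq
  refine mem_ball_two_mul hσ ?_ (by simp)
  rw [← sq_le_sq₀ (norm_nonneg _) hσ.le, ← normSq_eq_norm_sq, normSq_add_mul_I]
  linarith

lemma mul_exp_mul_I_mem_ball {σ ψ : ℝ} (hσ : 0 < σ) (hψ : ψ ∈ uIcc (-(π / 6)) (π / 6)) :
    (σ * exp (2 * ψ * I) : ℂ) ∈ ball (2 * σ : ℂ) (2 * σ) := by
  have hpi := Real.pi_pos
  rw [uIcc_of_le (by linarith)] at hψ
  have hexp : exp (2 * ψ * I) = exp ((2 * ψ : ℝ) * I) := by push_cast; rfl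
  have hcos : 1 / 2 ≤ Real.cos (2 * ψ) := by
    rw [← Real.cos_pi_div_three, ← Real.cos_abs (2 * ψ)]
    refine Real.cos_le_cos_of_nonneg_of_le_pi (abs_nonneg _) (by linarith) ?_
    exact abs_le.2 ⟨by linarith [hψ.1], by linarith [hψ.2]⟩
  rw [hexp]
  refine mem_ball_two_mul hσ ?_ ?_
  · rw [norm_mul, norm_exp_ofReal_mul_I, mul_one, norm_real, Real.norm_of_nonneg hσ.le]
  · rw [re_ofReal_mul, exp_ofReal_mul_I_re]
    nlinarith

lemma mul_exp_pi_div_three_mul_I (σ : ℝ) :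
    (σ * exp (2 * (π / 6 : ℝ) * I) : ℂ) = (σ / 2 : ℝ) + (√3 * (σ / 2) : ℝ) * I := by
  rw [show (2 * (π / 6 : ℝ) : ℂ) = (π / 3 : ℝ) by push_cast; ring, exp_mul_I, ← ofReal_cos,
    ← ofReal_sin, Real.cos_pi_div_three, Real.sin_pi_div_three]
  push_cast
  ring

lemma mul_exp_neg_pi_div_three_mul_I (σ : ℝ) :
    (σ * exp (2 * (-(π / 6) : ℝ) * I) : ℂ) = (σ / 2 : ℝ) + (-(√3 * (σ / 2)) : ℝ) * I := by
  rw [show (2 * (-(π / 6) : ℝ) : ℂ) = (-(π / 3) : ℝ) by push_cast; ring, exp_mul_I,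
    ← ofReal_cos, ← ofReal_sin, Real.cos_neg, Real.sin_neg, Real.cos_pi_div_three,
    Real.sin_pi_div_three]
  push_cast
  ring

lemma integral_segment_eq_integral_arc {f : ℂ → ℂ} (hf : DifferentiableOn ℂ f {s | 0 < s.re})
    {σ : ℝ} (hσ : 0 < σ) :
    ∫ y in -(√3 * (σ / 2))..√3 * (σ / 2), f ((σ / 2 : ℝ) + y * I) =
      2 * σ * ∫ ψ in -(π / 6)..π / 6, exp (2 * ψ * I) * f (σ * exp (2 * ψ * I)) := by
  -- This disc contains both paths, so a primitive of `f` on it computes both integrals.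
  have hball : ball (2 * σ : ℂ) (2 * σ) ⊆ {s | 0 < s.re} := by
    intro z hz
    have hre := (abs_re_le_norm _).trans_lt (mem_ball_iff_norm.1 hz)
    have : (z - 2 * σ).re = z.re - 2 * σ := by simp
    rw [this, abs_lt] at hre
    exact show 0 < z.re by linarith
  obtain ⟨g, hg⟩ := (hf.mono hball).isExactOn_ball
  have hcont := hf.continuousOn.mono hball
  have hsegment := integral_comp_mul_deriv_eq_sub hg hcont
    (γ := fun y : ℝ ↦ (σ / 2 : ℝ) + y * I) (γ' := fun _ ↦ I)
    (fun y ↦ by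
      simpa using ((hasDerivAt_id y).ofReal_comp.mul_const I).const_add ((σ / 2 : ℝ) : ℂ))
    continuous_const (fun _ ↦ add_mul_I_mem_ball hσ)
  have harc := integral_comp_mul_deriv_eq_sub hg hcont
    (γ := fun ψ : ℝ ↦ σ * exp (2 * ψ * I)) (γ' := fun ψ ↦ σ * (exp (2 * ψ * I) * (2 * I)))
    (fun ψ ↦ by
      simpa using ((((hasDerivAt_id ψ).ofReal_comp.const_mul (2 : ℂ)).mul_const I).cexp).const_mul
        (σ : ℂ))
    (by fun_prop) (fun _ ↦ mul_exp_mul_I_mem_ball hσ)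
  rw [mul_exp_pi_div_three_mul_I, mul_exp_neg_pi_div_three_mul_I] at harc
  apply mul_right_cancel₀ I_ne_zero
  rw [← intervalIntegral.integral_mul_const, hsegment, ← harc,
    ← intervalIntegral.integral_const_mul, ← intervalIntegral.integral_mul_const]
  congr 1 with ψ
  ring

lemma saddleIntegrand_mul_exp_mul_I {A N σ : ℝ} (hσ : 0 < σ) (hA : N * σ ^ 2 = A) {ψ : ℝ}
    (hψ : ψ ∈ uIcc (-(π / 6)) (π / 6)) :
    saddleIntegrand A N (σ * exp (2 * ψ * I)) =
      √(σ / (2 * π)) * (exp (ψ * I) * Real.exp (2 * (N * σ) * Real.cos (2 * ψ))) := by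
  have hpi := Real.pi_pos
  rw [uIcc_of_le (by linarith)] at hψ
  have hlog : log (exp (2 * ψ * I)) = 2 * ψ * I := by
    apply log_exp
    · simp only [mul_im, mul_re, re_ofNat, im_ofNat, ofReal_re, ofReal_im, I_re, I_im]
      linarith [hψ.1]
    · simp only [mul_im, mul_re, re_ofNat, im_ofNat, ofReal_re, ofReal_im, I_re, I_im]
      linarith [hψ.2]
  have hexponent : A / (σ * exp (2 * ψ * I)) + N * (σ * exp (2 * ψ * I)) =
      ((2 * (N * σ) * Real.cos (2 * ψ) : ℝ) : ℂ) := by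
    have hσ' : (σ : ℂ) ≠ 0 := ofReal_ne_zero.2 hσ.ne'
    rw [← hA, ← div_div, div_eq_mul_inv _ (exp _), ← exp_neg]
    push_cast
    rw [mul_right_comm (2 : ℂ) (N * σ : ℂ), two_cos, neg_mul]
    field_simp
    ring
  have hroot : (σ * exp (2 * ψ * I) / (2 * π)) ^ (1 / 2 : ℂ) =
      √(σ / (2 * π)) * exp (ψ * I) := by
    rw [show (σ * exp (2 * ψ * I) / (2 * π) : ℂ) = (σ / (2 * π) : ℝ) * exp (2 * ψ * I) by
      push_cast; ring, ofReal_mul_cpow_half (by positivity) (exp_ne_zero _),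
      cpow_def_of_ne_zero (exp_ne_zero _), hlog]
    ring_nf
  rw [saddleIntegrand, hroot, hexponent, ofReal_exp, mul_assoc]

lemma integral_cos_mul_exp_eq (L : ℝ) :
    ∫ ψ in -(π / 6)..π / 6, Real.cos (3 * ψ) * Real.exp (2 * L * Real.cos (2 * ψ)) =
      Real.exp (2 * L) *
        ∫ w in -(1 / 2 : ℝ)..1 / 2, (1 - 4 * w ^ 2) * Real.exp (-(4 * L) * w ^ 2) := by
  have hsubst := intervalIntegral.integral_comp_mul_deriv (a := -(π / 6)) (b := π / 6)
    (g := fun w ↦ (1 - 4 * w ^ 2) * Real.exp (-(4 * L) * w ^ 2))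
    (fun x _ ↦ Real.hasDerivAt_sin x) (by fun_prop) (by fun_prop)
  rw [Real.sin_neg, Real.sin_pi_div_six] at hsubst
  rw [← hsubst, ← intervalIntegral.integral_const_mul]
  congr 1 with ψ
  have hcos : Real.cos (3 * ψ) = (1 - 4 * Real.sin ψ ^ 2) * Real.cos ψ := by
    rw [Real.cos_three_mul]
    linear_combination 4 * Real.cos ψ * Real.cos_sq' ψ
  have hexp : Real.exp (2 * L * Real.cos (2 * ψ)) =
      Real.exp (2 * L) * Real.exp (-(4 * L) * Real.sin ψ ^ 2) := by
    rw [← Real.exp_add, Real.cos_two_mul, Real.cos_sq']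
    ring_nf
  rw [hcos, hexp, Function.comp]
  ring

lemma re_integral_saddleIntegrand {A N σ : ℝ} (hσ : 0 < σ) (hA : N * σ ^ 2 = A) :
    (∫ y in -(√3 * (σ / 2))..√3 * (σ / 2), saddleIntegrand A N ((σ / 2 : ℝ) + y * I)).re =
      2 * σ * √(σ / (2 * π)) * (Real.exp (2 * (N * σ)) *
        ∫ w in -(1 / 2 : ℝ)..1 / 2, (1 - 4 * w ^ 2) * Real.exp (-(4 * (N * σ)) * w ^ 2)) := by
  have harc : ∀ ψ ∈ uIcc (-(π / 6)) (π / 6),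
      exp (2 * ψ * I) * saddleIntegrand A N (σ * exp (2 * ψ * I)) =
        (√(σ / (2 * π)) : ℝ) *
          (exp ((3 * ψ : ℝ) * I) * Real.exp (2 * (N * σ) * Real.cos (2 * ψ))) := by
    intro ψ hψ
    have hexp : exp ((3 * ψ : ℝ) * I) = exp (2 * ψ * I) * exp (ψ * I) := by
      rw [← exp_add]
      push_cast
      ring_nf
    rw [saddleIntegrand_mul_exp_mul_I hσ hA hψ, hexp]
    ring
  have hre := reCLM.intervalIntegral_comp_comm (μ := MeasureTheory.volume)
    (a := -(π / 6)) (b := π / 6)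
    (f := fun ψ : ℝ ↦ exp ((3 * ψ : ℝ) * I) * Real.exp (2 * (N * σ) * Real.cos (2 * ψ)))
    (Continuous.intervalIntegrable (by fun_prop) _ _)
  simp only [reCLM_apply, re_mul_ofReal, exp_ofReal_mul_I_re] at hre
  rw [integral_segment_eq_integral_arc (differentiableOn_saddleIntegrand A N) hσ,
    intervalIntegral.integral_congr harc, intervalIntegral.integral_const_mul,
    ← integral_cos_mul_exp_eq, hre, show (2 * σ : ℂ) = (2 * σ : ℝ) by push_cast; rfl,
    re_ofReal_mul, re_ofReal_mul]
  ring

end SaddlePoint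

section Gaussian

lemma abs_integral_exp_neg_mul_sq_sub_sqrt_le {b c a : ℝ} (hb : 0 < b) (hbc : b ≤ c)
    (ha : 0 ≤ a) :
    |(∫ w in -a..a, Real.exp (-c * w ^ 2)) - √(π / c)| ≤
      Real.exp (-(c - b) * a ^ 2) * √(π / b) := by
  have hintegrable : MeasureTheory.Integrable fun w : ℝ ↦ Real.exp (-c * w ^ 2) :=
    integrable_exp_neg_mul_sq (hb.trans_le hbc)
  have hmajor : MeasureTheory.Integrable
      fun w : ℝ ↦ Real.exp (-(c - b) * a ^ 2) * Real.exp (-b * w ^ 2) :=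
    (integrable_exp_neg_mul_sq hb).const_mul _
  have htail : ∀ w ∈ (Ioc (-a) a)ᶜ,
      Real.exp (-c * w ^ 2) ≤ Real.exp (-(c - b) * a ^ 2) * Real.exp (-b * w ^ 2) := by
    intro w hw
    have hsq : a ^ 2 ≤ w ^ 2 := by
      by_contra! hlt
      have habs := abs_lt.1 (abs_lt_of_sq_lt_sq hlt ha)
      exact hw ⟨habs.1, habs.2.le⟩
    rw [← Real.exp_add, Real.exp_le_exp]
    nlinarith
  have hsplit := MeasureTheory.integral_add_compl (measurableSet_Ioc (a := -a) (b := a)) hintegrable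
  rw [integral_gaussian] at hsplit
  rw [intervalIntegral.integral_of_le (by linarith), ← hsplit, sub_add_cancel_left, abs_neg,
    abs_of_nonneg (MeasureTheory.integral_nonneg fun _ ↦ (Real.exp_pos _).le)]
  calc ∫ w in (Ioc (-a) a)ᶜ, Real.exp (-c * w ^ 2)
      ≤ ∫ w in (Ioc (-a) a)ᶜ, Real.exp (-(c - b) * a ^ 2) * Real.exp (-b * w ^ 2) :=
        MeasureTheory.setIntegral_mono_on hintegrable.integrableOn hmajor.integrableOn
          measurableSet_Ioc.compl htail
    _ ≤ ∫ w, Real.exp (-(c - b) * a ^ 2) * Real.exp (-b * w ^ 2) :=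
        MeasureTheory.setIntegral_le_integral hmajor
          (MeasureTheory.ae_of_all _ fun _ ↦ by positivity)
    _ = Real.exp (-(c - b) * a ^ 2) * √(π / b) := by
        rw [MeasureTheory.integral_const_mul, integral_gaussian]

lemma integral_sq_mul_exp_neg_mul_sq {c : ℝ} (hc : c ≠ 0) (a : ℝ) :
    ∫ w in -a..a, w ^ 2 * Real.exp (-c * w ^ 2) =
      ((∫ w in -a..a, Real.exp (-c * w ^ 2)) - 2 * a * Real.exp (-c * a ^ 2)) / (2 * c) := by
  have hderiv (w : ℝ) : HasDerivAt (fun w ↦ w * Real.exp (-c * w ^ 2))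
      (Real.exp (-c * w ^ 2) - 2 * c * (w ^ 2 * Real.exp (-c * w ^ 2))) w := by
    convert! (hasDerivAt_id w).mul (((hasDerivAt_pow 2 w).const_mul (-c)).exp) using 1
    simp only [id_eq, Nat.cast_ofNat, Nat.add_one_sub_one, pow_one]
    ring
  have hparts := intervalIntegral.integral_eq_sub_of_hasDerivAt (a := -a) (b := a)
    (fun w _ ↦ hderiv w) (Continuous.intervalIntegrable (by fun_prop) _ _)
  rw [intervalIntegral.integral_sub (Continuous.intervalIntegrable (by fun_prop) _ _)
      (Continuous.intervalIntegrable (by fun_prop) _ _),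
    intervalIntegral.integral_const_mul, neg_sq] at hparts
  rw [eq_div_iff (by simpa using hc)]
  linarith

lemma abs_integral_one_sub_mul_exp_sub_le {L : ℝ} (hL : 1 ≤ L) :
    |(∫ w in -(1 / 2 : ℝ)..1 / 2, (1 - 4 * w ^ 2) * Real.exp (-(4 * L) * w ^ 2)) -
      (1 - 1 / (2 * L)) * √(π / (4 * L))| ≤ 4 * Real.exp (-L) := by
  have hgauss : |(∫ w in -(1 / 2 : ℝ)..1 / 2, Real.exp (-(4 * L) * w ^ 2)) - √(π / (4 * L))| ≤
      3 * Real.exp (-L) := by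
    refine (abs_integral_exp_neg_mul_sq_sub_sqrt_le (b := 4) (by norm_num) (by linarith)
      (by norm_num)).trans ?_
    rw [show -(4 * L - 4) * (1 / 2) ^ 2 = 1 + -L by ring, Real.exp_add]
    have hsqrt : √(π / 4) ≤ 1 := by
      rw [Real.sqrt_le_one]
      linarith [Real.pi_lt_four]
    nlinarith [Real.exp_one_lt_d9, Real.exp_pos (-L), Real.exp_pos 1, Real.sqrt_nonneg (π / 4),
      mul_pos (Real.exp_pos 1) (Real.exp_pos (-L))]
  have hparts : ∫ w in -(1 / 2 : ℝ)..1 / 2, (1 - 4 * w ^ 2) * Real.exp (-(4 * L) * w ^ 2) =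
      (1 - 1 / (2 * L)) * (∫ w in -(1 / 2 : ℝ)..1 / 2, Real.exp (-(4 * L) * w ^ 2)) +
        Real.exp (-L) / (2 * L) := by
    simp only [sub_mul, one_mul, mul_assoc (4 : ℝ) (_ ^ 2)]
    rw [intervalIntegral.integral_sub (Continuous.intervalIntegrable (by fun_prop) _ _)
      (Continuous.intervalIntegrable (by fun_prop) _ _), intervalIntegral.integral_const_mul,
      integral_sq_mul_exp_neg_mul_sq (by positivity),
      show -(4 * L) * (1 / 2 : ℝ) ^ 2 = -L by ring]
    field_simp
    ring
  set G := ∫ w in -(1 / 2 : ℝ)..1 / 2, Real.exp (-(4 * L) * w ^ 2)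
  have hfactor : |1 - 1 / (2 * L)| ≤ 1 := by
    have : 1 / (2 * L) ≤ 1 := by rw [div_le_one (by linarith)]; linarith
    rw [abs_of_nonneg (by linarith)]
    linarith [show 0 < 1 / (2 * L) by positivity]
  calc _ = |(1 - 1 / (2 * L)) * (G - √(π / (4 * L))) + Real.exp (-L) / (2 * L)| := by
        rw [hparts]; ring_nf
    _ ≤ |1 - 1 / (2 * L)| * |G - √(π / (4 * L))| + |Real.exp (-L) / (2 * L)| := by
        rw [← abs_mul]; exact abs_add_le _ _
    _ ≤ 1 * (3 * Real.exp (-L)) + Real.exp (-L) := by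
        gcongr
        rw [abs_of_nonneg (by positivity)]
        exact div_le_self (Real.exp_pos _).le (by linarith)
    _ = 4 * Real.exp (-L) := by ring

end Gaussian

section HardyRamanujan

/-- The constant `π √(2/3)` in `p(n) ~ exp (π √(2n/3)) / (4√3 n)`. -/
noncomputable def hardyRamanujanRate : ℝ := π * √(2 / 3)

/-- The leading term of Rademacher's series, which approximates `p(n)` at `y = n - 1 / 24` up to an
exponentially small relative error. -/
noncomputable def hardyRamanujanMain (y : ℝ) : ℝ :=
  Real.exp (hardyRamanujanRate * √y) / (4 * √3 * y) * (1 - 1 / (hardyRamanujanRate * √y))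

lemma hardyRamanujanRate_pos : 0 < hardyRamanujanRate := by
  unfold hardyRamanujanRate
  positivity

lemma hardyRamanujanRate_sq : hardyRamanujanRate ^ 2 = 2 * π ^ 2 / 3 := by
  rw [hardyRamanujanRate, mul_pow, Real.sq_sqrt (by norm_num)]
  ring

lemma abs_re_integral_saddleIntegrand_sub_le {A N σ : ℝ} (hσ : 0 < σ) (hσ_le : σ ≤ 1 / 2)
    (hA : N * σ ^ 2 = A) (hL : 1 ≤ N * σ) :
    |(∫ y in -(√3 * (σ / 2))..√3 * (σ / 2), saddleIntegrand A N ((σ / 2 : ℝ) + y * I)).re -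
        σ / √(2 * N) * Real.exp (2 * (N * σ)) * (1 - 1 / (2 * (N * σ)))| ≤
      4 * Real.exp (N * σ) := by
  have hN : 0 < N := pos_of_mul_pos_left (one_pos.trans_le hL) hσ.le
  have hgauss := abs_integral_one_sub_mul_exp_sub_le hL
  have hsqrt : 2 * √(σ / (2 * π)) * √(π / (4 * (N * σ))) = 1 / √(2 * N) := by
    rw [mul_assoc, ← Real.sqrt_mul (by positivity), show σ / (2 * π) * (π / (4 * (N * σ))) =
      1 / (2 * N) / 2 ^ 2 by field_simp; norm_num, Real.sqrt_div (by positivity),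
      Real.sqrt_sq zero_le_two, Real.sqrt_div zero_le_one, Real.sqrt_one]
    ring
  have hprefactor : 2 * σ * √(σ / (2 * π)) ≤ 1 := by
    have : √(σ / (2 * π)) ≤ 1 := by
      rw [Real.sqrt_le_one, div_le_one (by positivity)]
      linarith [Real.pi_gt_three]
    nlinarith [Real.sqrt_nonneg (σ / (2 * π))]
  rw [re_integral_saddleIntegrand hσ hA]
  set J := ∫ w in -(1 / 2 : ℝ)..1 / 2, (1 - 4 * w ^ 2) * Real.exp (-(4 * (N * σ)) * w ^ 2)
  calc _ = |2 * σ * √(σ / (2 * π)) * (Real.exp (2 * (N * σ)) *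
          (J - (1 - 1 / (2 * (N * σ))) * √(π / (4 * (N * σ)))))| := by
        congr 1
        linear_combination (σ * Real.exp (2 * (N * σ)) * (1 - 1 / (2 * (N * σ)))) * hsqrt
    _ = 2 * σ * √(σ / (2 * π)) * (Real.exp (2 * (N * σ)) *
          |J - (1 - 1 / (2 * (N * σ))) * √(π / (4 * (N * σ)))|) := by
        rw [abs_mul, abs_mul (Real.exp _), Real.abs_exp, abs_of_nonneg (by positivity)]
    _ ≤ 1 * (Real.exp (2 * (N * σ)) * (4 * Real.exp (-(N * σ)))) := by gcongr
    _ = 4 * Real.exp (N * σ) := by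
        rw [mul_left_comm (Real.exp _), ← Real.exp_add]
        ring_nf

lemma two_pi_mul_hardyRamanujanMain {y : ℝ} (hy : 0 < y) :
    2 * π * hardyRamanujanMain y = hardyRamanujanRate / (2 * √y) / √(2 * y) *
      Real.exp (hardyRamanujanRate * √y) * (1 - 1 / (hardyRamanujanRate * √y)) := by
  have hconst : 2 * π / (4 * √3 * y) = hardyRamanujanRate / (2 * √y) / √(2 * y) := by
    have hsqrt_y := Real.sq_sqrt hy.le
    rw [hardyRamanujanRate, Real.sqrt_div zero_le_two, Real.sqrt_mul zero_le_two]
    field_simp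
    linear_combination 4 * hsqrt_y
  rw [hardyRamanujanMain, ← hconst]
  ring

lemma mul_hardyRamanujanRate_div {y : ℝ} (hy : 0 < y) :
    y * (hardyRamanujanRate / (2 * √y)) = hardyRamanujanRate * √y / 2 := by
  nth_rw 1 [← Real.sq_sqrt hy.le]
  field_simp

lemma mul_hardyRamanujanRate_div_sq {y : ℝ} (hy : 0 < y) :
    y * (hardyRamanujanRate / (2 * √y)) ^ 2 = π ^ 2 / 6 := by
  rw [div_pow, hardyRamanujanRate_sq, mul_pow, Real.sq_sqrt hy.le]
  field_simp
  norm_num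

lemma exists_abs_card_partition_sub_hardyRamanujanMain_le :
    ∃ C, ∀ n : ℕ, 0 < (n : ℝ) - 1 / 24 → hardyRamanujanRate ≤ √(n - 1 / 24) →
      2 ≤ hardyRamanujanRate * √(n - 1 / 24) →
      |(Fintype.card (Nat.Partition n) : ℝ) - hardyRamanujanMain (n - 1 / 24)| ≤
        C * Real.exp (19 / 20 * (hardyRamanujanRate * √(n - 1 / 24))) := by
  obtain ⟨C, hC⟩ := exists_norm_card_partition_sub_integral_le
  refine ⟨C + 4, fun n hy hσ_le hL ↦ ?_⟩
  have hrate := hardyRamanujanRate_pos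
  specialize hC n
  set y := (n : ℝ) - 1 / 24
  have hσ_le_half : hardyRamanujanRate / (2 * √y) ≤ 1 / 2 := by
    rw [div_le_iff₀ (by positivity)]
    linarith
  have hσ : 0 < hardyRamanujanRate / (2 * √y) := by positivity
  have hcircle := (abs_re_le_norm _).trans
    (hC _ hσ hσ_le_half (mul_hardyRamanujanRate_div_sq hy))
  have hmain := abs_re_integral_saddleIntegrand_sub_le hσ hσ_le_half
    (mul_hardyRamanujanRate_div_sq hy) (by rw [mul_hardyRamanujanRate_div hy]; linarith)
  rw [sub_re, show (2 * π * (Fintype.card (Nat.Partition n) : ℂ)).re =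
    2 * π * (Fintype.card (Nat.Partition n) : ℝ) by simp, mul_hardyRamanujanRate_div hy] at hcircle
  rw [mul_hardyRamanujanRate_div hy, mul_div_cancel₀ _ two_ne_zero,
    ← two_pi_mul_hardyRamanujanMain hy] at hmain
  have hexp : Real.exp (hardyRamanujanRate * √y / 2) ≤
      Real.exp (19 / 10 * (hardyRamanujanRate * √y / 2)) := by
    gcongr
    linarith
  have htotal := (abs_sub_le _ _ _).trans (add_le_add hcircle hmain)
  rw [← mul_sub, abs_mul, abs_of_pos (by positivity)] at htotal
  rw [show 19 / 20 * (hardyRamanujanRate * √y) = 19 / 10 * (hardyRamanujanRate * √y / 2) by ring]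
  nlinarith [Real.pi_gt_three,
    abs_nonneg ((Fintype.card (Nat.Partition n) : ℝ) - hardyRamanujanMain y)]

lemma tendsto_natCast_sub_atTop (a : ℝ) : Tendsto (fun n : ℕ ↦ (n : ℝ) - a) atTop atTop :=
  tendsto_atTop_add_const_right _ _ tendsto_natCast_atTop_atTop

lemma eventually_lt_hardyRamanujanRate_mul_sqrt (c : ℝ) :
    ∀ᶠ y in atTop, c < hardyRamanujanRate * √y :=
  (Real.tendsto_sqrt_atTop.const_mul_atTop hardyRamanujanRate_pos).eventually_gt_atTop c

lemma isBigO_card_partition_sub_hardyRamanujanMain :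
    (fun n : ℕ ↦ (Fintype.card (Nat.Partition n) : ℝ) - hardyRamanujanMain (n - 1 / 24))
      =O[atTop] fun n : ℕ ↦ Real.exp (19 / 20 * (hardyRamanujanRate * √(n - 1 / 24))) := by
  obtain ⟨C, hC⟩ := exists_abs_card_partition_sub_hardyRamanujanMain_le
  have hcast := tendsto_natCast_sub_atTop (1 / 24)
  refine .of_bound C ?_
  filter_upwards [hcast.eventually_gt_atTop 0,
    (Real.tendsto_sqrt_atTop.comp hcast).eventually_ge_atTop hardyRamanujanRate,
    hcast.eventually (eventually_lt_hardyRamanujanRate_mul_sqrt 2)] with n hy hσ_le hL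
  rw [Real.norm_eq_abs, Real.norm_of_nonneg (Real.exp_pos _).le]
  exact hC n hy hσ_le hL.le

lemma exp_div_le_hardyRamanujanMain {y : ℝ} (hy : 0 < y) (hrate : 2 ≤ hardyRamanujanRate * √y) :
    Real.exp (hardyRamanujanRate * √y) / (8 * √3 * y) ≤ hardyRamanujanMain y := by
  have hfactor : 1 / (hardyRamanujanRate * √y) ≤ 1 / 2 := by gcongr
  calc _ = Real.exp (hardyRamanujanRate * √y) / (4 * √3 * y) * (1 / 2) := by ring
    _ ≤ hardyRamanujanMain y := by
      unfold hardyRamanujanMain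
      gcongr
      linarith

lemma eventually_hardyRamanujanMain_pos : ∀ᶠ y in atTop, 0 < hardyRamanujanMain y := by
  filter_upwards [eventually_gt_atTop 0, eventually_lt_hardyRamanujanRate_mul_sqrt 2]
    with y hy hrate
  exact lt_of_lt_of_le (by positivity) (exp_div_le_hardyRamanujanMain hy hrate.le)

lemma isBigO_inv_hardyRamanujanMain :
    (fun y ↦ (hardyRamanujanMain y)⁻¹) =O[atTop]
      fun y ↦ y * Real.exp (-(hardyRamanujanRate * √y)) := by
  refine .of_bound (8 * √3) ?_
  filter_upwards [eventually_gt_atTop 0, eventually_lt_hardyRamanujanRate_mul_sqrt 2,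
    eventually_hardyRamanujanMain_pos] with y hy hrate hpos
  rw [norm_inv, Real.norm_of_nonneg hpos.le, Real.norm_of_nonneg (by positivity), Real.exp_neg]
  refine (inv_anti₀ (by positivity) (exp_div_le_hardyRamanujanMain hy hrate.le)).trans_eq ?_
  rw [inv_div]
  ring

lemma log_hardyRamanujanMain {y : ℝ} (hy : 0 < y) (hrate : 1 < hardyRamanujanRate * √y) :
    Real.log (hardyRamanujanMain y) = hardyRamanujanRate * y ^ (1 / 2 : ℝ) - Real.log y +
      Real.log (1 - hardyRamanujanRate⁻¹ * y ^ (-(1 / 2) : ℝ)) - Real.log (4 * √3) := by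
  have hfactor : 0 < 1 - 1 / (hardyRamanujanRate * √y) := by
    rw [sub_pos, div_lt_one (by positivity)]
    exact hrate
  rw [Real.rpow_neg hy.le, ← Real.sqrt_eq_rpow, ← mul_inv, ← one_div, hardyRamanujanMain,
    Real.log_mul (by positivity) hfactor.ne', Real.log_div (by positivity) (by positivity),
    Real.log_exp, Real.log_mul (by positivity) hy.ne']
  ring

lemma isBigO_mul_exp_neg_mul_sqrt {b : ℝ} (hb : 0 < b) (β : ℝ) :
    (fun y : ℝ ↦ y * Real.exp (-b * √y)) =O[atTop] fun y : ℝ ↦ y ^ β := by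
  have hexp := (isLittleO_exp_neg_mul_rpow_atTop hb (2 * (β - 1))).isBigO.comp_tendsto
    Real.tendsto_sqrt_atTop
  refine ((isBigO_refl (fun y : ℝ ↦ y) atTop).mul hexp).congr' .rfl ?_
  filter_upwards [eventually_gt_atTop 0] with y hy
  rw [Function.comp, Real.sqrt_eq_rpow, ← Real.rpow_mul hy.le]
  nth_rw 1 [← Real.rpow_one y]
  rw [← Real.rpow_add hy]
  ring_nf

lemma isEquivalent_rpow_of_tendsto_atTop {α : Type*} {l : Filter α} {u v : α → ℝ}
    (huv : u ~[l] v) (hv : Tendsto v l atTop) (β : ℝ) :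
    (fun x ↦ u x ^ β) ~[l] fun x ↦ v x ^ β := by
  have habs : v =ᶠ[l] fun x ↦ |v x| :=
    (hv.eventually_ge_atTop 0).mono fun x hx ↦ (abs_of_nonneg hx).symm
  refine ((huv.congr_right habs).rpow (fun x ↦ abs_nonneg (v x))).congr_right ?_
  exact habs.symm.mono fun x hx ↦ congrArg (· ^ β) hx

lemma isEquivalent_rpow_add_const (c β : ℝ) :
    (fun x : ℝ ↦ (x + c) ^ β) ~[atTop] fun x ↦ x ^ β :=
  isEquivalent_rpow_of_tendsto_atTop
    (IsEquivalent.refl.add_isLittleO (isLittleO_const_id_atTop c)) tendsto_id β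

lemma isEquivalent_natCast_sub_rpow (a β : ℝ) :
    (fun n : ℕ ↦ ((n : ℝ) - a) ^ β) ~[atTop] fun n : ℕ ↦ (n : ℝ) ^ β :=
  (isEquivalent_rpow_add_const (-a) β).comp_tendsto tendsto_natCast_atTop_atTop

lemma isBigO_card_partition_div_hardyRamanujanMain_sub_one (β : ℝ) :
    (fun n : ℕ ↦ (Fintype.card (Nat.Partition n) : ℝ) / hardyRamanujanMain (n - 1 / 24) - 1)
      =O[atTop] fun n : ℕ ↦ (n : ℝ) ^ β := by
  have hrate := hardyRamanujanRate_pos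
  have hcast := tendsto_natCast_sub_atTop (1 / 24)
  have hrel : (fun n : ℕ ↦
      (Fintype.card (Nat.Partition n) : ℝ) / hardyRamanujanMain (n - 1 / 24) - 1) =O[atTop]
      ((fun y : ℝ ↦ y * Real.exp (-(hardyRamanujanRate / 20) * √y)) ∘
        fun n : ℕ ↦ (n : ℝ) - 1 / 24) := by
    refine (isBigO_card_partition_sub_hardyRamanujanMain.mul
      (isBigO_inv_hardyRamanujanMain.comp_tendsto hcast)).congr' ?_ (.of_eq ?_)
    · filter_upwards [hcast.eventually eventually_hardyRamanujanMain_pos] with n hpos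
      rw [Function.comp, ← div_eq_mul_inv, sub_div, div_self hpos.ne']
    · funext n
      rw [Function.comp, Function.comp, mul_left_comm, ← Real.exp_add]
      ring_nf
  exact (hrel.trans ((isBigO_mul_exp_neg_mul_sqrt (by positivity) β).comp_tendsto hcast)).trans
    (isEquivalent_natCast_sub_rpow _ β).isBigO

lemma isBigO_log_sub_log {α : Type*} {l : Filter α} {f g ε : α → ℝ}
    (h : (fun x ↦ f x / g x - 1) =O[l] ε) (hε : Tendsto ε l (𝓝 0)) :
    (fun x ↦ Real.log (f x) - Real.log (g x)) =O[l] ε := by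
  have hratio : Tendsto (fun x ↦ f x / g x) l (𝓝 1) := by
    simpa using (h.trans_tendsto hε).add_const 1
  have hlog := ((Real.hasDerivAt_log one_ne_zero).isBigO_sub.comp_tendsto hratio).trans h
  refine hlog.congr' ?_ .rfl
  filter_upwards [hratio.eventually_ne one_ne_zero] with x hx
  obtain ⟨hf, hg⟩ := div_ne_zero_iff.1 hx
  simp [Real.log_div hf hg]

lemma isBigO_log_card_partition_sub_log_hardyRamanujanMain {β : ℝ} (hβ : β < 0) :
    (fun n : ℕ ↦ Real.log (Fintype.card (Nat.Partition n)) -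
      Real.log (hardyRamanujanMain (n - 1 / 24))) =O[atTop] fun n : ℕ ↦ (n : ℝ) ^ β := by
  refine isBigO_log_sub_log (isBigO_card_partition_div_hardyRamanujanMain_sub_one β) ?_
  simpa [Function.comp_def] using
    (tendsto_rpow_neg_atTop (neg_pos.2 hβ)).comp tendsto_natCast_atTop_atTop

end HardyRamanujan

section FiniteDifferences

variable {M G : Type*} [AddCommMonoid M] {l : Filter M} {h : M}

lemma isBigO_fwdDiff_iter [SeminormedAddCommGroup G] {u : M → G} {g : M → ℝ}
    (hl : Tendsto (· + h) l l) (hg : (fun x ↦ g (x + h)) =O[l] g) (hu : u =O[l] g) (r : ℕ) :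
    Δ_[h] ^[r] u =O[l] g := by
  induction r with
  | zero => exact hu
  | succ r ih =>
    rw [Function.iterate_succ_apply']
    exact ((ih.comp_tendsto hl).trans hg).sub ih

lemma eventuallyEq_fwdDiff_iter [AddCommGroup G] {u v : M → G} (hl : Tendsto (· + h) l l)
    (huv : u =ᶠ[l] v) (r : ℕ) : Δ_[h] ^[r] u =ᶠ[l] Δ_[h] ^[r] v := by
  induction r with
  | zero => exact huv
  | succ r ih =>
    simp only [Function.iterate_succ_apply']
    exact (ih.comp_tendsto hl).sub ih

lemma fwdDiff_iter_comp {M' : Type*} [AddCommMonoid M'] [AddCommGroup G] {h' : M'}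
    {φ : M → M'} (hφ : ∀ x, φ (x + h) = φ x + h') (f : M' → G) (r : ℕ) :
    Δ_[h] ^[r] (f ∘ φ) = Δ_[h'] ^[r] f ∘ φ := by
  have hstep : Function.Semiconj (fun f : M' → G ↦ f ∘ φ) (fwdDiff h') (fwdDiff h) := by
    intro f
    funext x
    simp [fwdDiff, hφ]
  exact (hstep.iterate_right r f).symm

lemma exists_fwdDiff_iter_eq (r : ℕ) (f : ℕ → ℝ → ℝ) {x : ℝ}
    (hf : ∀ j < r, ∀ t ∈ Icc x (x + r), HasDerivAt (f j) (f (j + 1) t) t) :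
    ∃ ξ ∈ Icc x (x + r), Δ_[1] ^[r] (f 0) x = f r ξ := by
  induction r generalizing f with
  | zero => exact ⟨x, by simp, rfl⟩
  | succ r ih =>
    push_cast at hf
    obtain ⟨ξ, hξ, heq⟩ := ih (fun j ↦ Δ_[1] (f j)) fun j hj t ht ↦
      ((hf j (by omega) (t + 1) ⟨by linarith [ht.1], by linarith [ht.2]⟩).comp_add_const t 1).sub
        (hf j (by omega) t ⟨ht.1, by linarith [ht.2]⟩)
    have hderiv : ∀ t ∈ Icc ξ (ξ + 1), HasDerivAt (f r) (f (r + 1) t) t := fun t ht ↦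
      hf r r.lt_succ_self t ⟨hξ.1.trans ht.1, by linarith [ht.2, hξ.2]⟩
    obtain ⟨η, hη, hslope⟩ := exists_hasDerivAt_eq_slope (f r) (f (r + 1)) (lt_add_one ξ)
      (fun t ht ↦ (hderiv t ht).continuousAt.continuousWithinAt)
      fun t ht ↦ hderiv t (Ioo_subset_Icc_self ht)
    refine ⟨η, ⟨hξ.1.trans hη.1.le, by push_cast; linarith [hη.2, hξ.2]⟩, ?_⟩
    rw [Function.iterate_succ_apply, heq, hslope, add_sub_cancel_left, div_one, fwdDiff]

lemma isEquivalent_fwdDiff_iter_of_hasDerivAt {r : ℕ} {f : ℕ → ℝ → ℝ} {c β : ℝ}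
    (hf : ∀ j < r, ∀ t > 0, HasDerivAt (f j) (f (j + 1) t) t)
    (hfr : ∀ t > 0, f r t = c * t ^ β) :
    Δ_[1] ^[r] (f 0) ~[atTop] fun x ↦ c * x ^ β := by
  have hmean : ∀ x : ℝ, ∃ ξ, 0 < x → ξ ∈ Icc x (x + r) ∧ Δ_[1] ^[r] (f 0) x = f r ξ := by
    intro x
    by_cases hx : 0 < x
    · obtain ⟨ξ, hξ, heq⟩ := exists_fwdDiff_iter_eq r f (x := x)
        fun j hj t ht ↦ hf j hj t (hx.trans_le ht.1)
      exact ⟨ξ, fun _ ↦ ⟨hξ, heq⟩⟩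
    · exact ⟨0, fun h ↦ absurd h hx⟩
  choose ξ hξ using hmean
  have hξ_equiv : ξ ~[atTop] fun x ↦ x := by
    have hbounded : (fun x ↦ ξ x - x) =O[atTop] fun _ ↦ (1 : ℝ) := by
      refine .of_bound r ?_
      filter_upwards [eventually_gt_atTop 0] with x hx
      obtain ⟨hlower, hupper⟩ := (hξ x hx).1
      rw [norm_one, mul_one, Real.norm_of_nonneg (by linarith)]
      linarith
    exact hbounded.trans_isLittleO (isLittleO_const_id_atTop 1)
  refine (IsEquivalent.refl.mul
    (isEquivalent_rpow_of_tendsto_atTop hξ_equiv tendsto_id β)).congr_left ?_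
  filter_upwards [eventually_gt_atTop 0] with x hx
  obtain ⟨hmem, heq⟩ := hξ x hx
  rw [heq, hfr _ (hx.trans_le hmem.1), Pi.mul_apply]

lemma hasDerivAt_descPochhammer_mul_rpow (α : ℝ) (j : ℕ) {t : ℝ} (ht : t ≠ 0) :
    HasDerivAt (fun t ↦ (descPochhammer ℝ j).eval α * t ^ (α - j))
      ((descPochhammer ℝ (j + 1)).eval α * t ^ (α - (j + 1 : ℕ))) t := by
  convert! (Real.hasDerivAt_rpow_const (p := α - j) (.inl ht)).const_mul _ using 1
  rw [descPochhammer_succ_eval]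
  push_cast
  ring_nf

lemma isEquivalent_fwdDiff_iter_rpow (α : ℝ) (r : ℕ) :
    Δ_[1] ^[r] (fun x : ℝ ↦ x ^ α) ~[atTop]
      fun x ↦ (descPochhammer ℝ r).eval α * x ^ (α - r) := by
  simpa using isEquivalent_fwdDiff_iter_of_hasDerivAt
    (f := fun j t ↦ (descPochhammer ℝ j).eval α * t ^ (α - j))
    (fun j _ t ht ↦ hasDerivAt_descPochhammer_mul_rpow α j (ne_of_gt ht)) fun _ _ ↦ rfl

lemma isEquivalent_fwdDiff_iter_log (r : ℕ) :
    Δ_[1] ^[r + 1] Real.log ~[atTop]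
      fun x ↦ (descPochhammer ℝ r).eval (-1) * x ^ (-1 - r : ℝ) := by
  refine isEquivalent_fwdDiff_iter_of_hasDerivAt (r := r + 1)
    (f := fun j t ↦ j.casesOn (Real.log t)
      fun i ↦ (descPochhammer ℝ i).eval (-1) * t ^ (-1 - i : ℝ)) (fun j _ t ht ↦ ?_)
    fun _ _ ↦ rfl
  cases j with
  | zero => simpa [Real.rpow_neg_one] using Real.hasDerivAt_log (ne_of_gt ht)
  | succ i => exact hasDerivAt_descPochhammer_mul_rpow (-1) i (ne_of_gt ht)

lemma isLittleO_rpow_rpow_atTop {β γ : ℝ} (h : β < γ) :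
    (fun x : ℝ ↦ x ^ β) =o[atTop] fun x ↦ x ^ γ := by
  have hlim := tendsto_rpow_neg_atTop (sub_pos.2 h)
  refine (isLittleO_iff_tendsto' ?_).2 (hlim.congr' ?_)
  · filter_upwards [eventually_gt_atTop 0] with x hx hzero
    exact absurd hzero (Real.rpow_pos_of_pos hx γ).ne'
  · filter_upwards [eventually_gt_atTop 0] with x hx
    rw [neg_sub, Real.rpow_sub hx]

lemma isBigO_rpow_rpow_atTop {β γ : ℝ} (h : β ≤ γ) :
    (fun x : ℝ ↦ x ^ β) =O[atTop] fun x ↦ x ^ γ := by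
  rcases h.eq_or_lt with rfl | hlt
  · exact isBigO_refl _ _
  · exact (isLittleO_rpow_rpow_atTop hlt).isBigO

lemma isBigO_sum_add_log_one_sub (k : ℕ) :
    (fun u : ℝ ↦ ∑ i ∈ Finset.range k, u ^ (i + 1) / (i + 1) + Real.log (1 - u))
      =O[𝓝 0] fun u ↦ u ^ (k + 1) := by
  refine .of_bound 2 ?_
  filter_upwards [ball_mem_nhds (0 : ℝ) one_half_pos] with u hu
  rw [mem_ball_zero_iff, Real.norm_eq_abs] at hu
  refine (Real.abs_log_sub_add_sum_range_le (hu.trans one_half_lt_one) k).trans ?_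
  rw [norm_pow, Real.norm_eq_abs, div_le_iff₀ (by linarith)]
  nlinarith [show 0 ≤ |u| ^ (k + 1) by positivity]

lemma isBigO_fwdDiff_iter_log_one_sub (b : ℝ) (r : ℕ) :
    Δ_[1] ^[r] (fun x : ℝ ↦ Real.log (1 - b * x ^ (-(1 / 2) : ℝ))) =O[atTop]
      fun x ↦ x ^ (-(1 / 2) - r : ℝ) := by
  have hpow : ∀ᶠ x : ℝ in atTop, ∀ k : ℕ,
      (b * x ^ (-(1 / 2) : ℝ)) ^ k = b ^ k * x ^ (-(k / 2) : ℝ) := by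
    filter_upwards [eventually_gt_atTop 0] with x hx k
    rw [mul_pow, ← Real.rpow_mul_natCast hx.le]
    ring_nf
  have hu : Tendsto (fun x : ℝ ↦ b * x ^ (-(1 / 2) : ℝ)) atTop (𝓝 0) := by
    simpa using (tendsto_rpow_neg_atTop one_half_pos).const_mul b
  set R : ℝ → ℝ := fun x ↦ ∑ i ∈ Finset.range (2 * r),
    (b * x ^ (-(1 / 2) : ℝ)) ^ (i + 1) / (i + 1) + Real.log (1 - b * x ^ (-(1 / 2) : ℝ))
  have hremainder : R =O[atTop] fun x ↦ x ^ (-(1 / 2) - r : ℝ) := by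
    refine ((isBigO_sum_add_log_one_sub (2 * r)).comp_tendsto hu).trans
      (.of_bound |b ^ (2 * r + 1)| ?_)
    filter_upwards [hpow] with x hx
    rw [Function.comp, hx, norm_mul, Real.norm_eq_abs (b ^ _)]
    push_cast
    ring_nf
    rfl
  have hsplit : (fun x : ℝ ↦ Real.log (1 - b * x ^ (-(1 / 2) : ℝ))) =ᶠ[atTop]
      R + ∑ i ∈ Finset.range (2 * r),
        (-(b ^ (i + 1) / (i + 1))) • fun x : ℝ ↦ x ^ (-((i + 1 : ℕ) / 2) : ℝ) := by
    filter_upwards [hpow] with x hx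
    simp only [R, hx, Pi.add_apply, Finset.sum_apply, Pi.smul_apply, smul_eq_mul]
    rw [add_right_comm, ← Finset.sum_add_distrib, Finset.sum_eq_zero fun i _ ↦ by ring, zero_add]
  have hshift : Tendsto (fun x : ℝ ↦ x + 1) atTop atTop :=
    tendsto_atTop_add_const_right _ _ tendsto_id
  refine (eventuallyEq_fwdDiff_iter hshift hsplit r).trans_isBigO ?_
  rw [fwdDiff_iter_add, fwdDiff_iter_finsetSum]
  refine (isBigO_fwdDiff_iter hshift (isEquivalent_rpow_add_const 1 _).isBigO hremainder r).add
    (.sum fun i _ ↦ ?_)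
  rw [fwdDiff_iter_const_smul]
  refine ((isEquivalent_fwdDiff_iter_rpow _ r).isBigO.trans
    ((isBigO_rpow_rpow_atTop ?_).const_mul_left _)).const_smul_left _
  push_cast
  linarith [show (0 : ℝ) ≤ i by positivity]

lemma neg_one_pow_mul_descPochhammer_eval_pos {α : ℝ} (hα₀ : 0 < α) (hα₁ : α < 1) (j : ℕ) :
    0 < (-1) ^ j * (descPochhammer ℝ (j + 1)).eval α := by
  induction j with
  | zero => simpa using hα₀
  | succ j ih =>
    rw [descPochhammer_succ_eval, show (-1 : ℝ) ^ (j + 1) * ((descPochhammer ℝ (j + 1)).eval α *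
      (α - (j + 1 : ℕ))) = (-1) ^ j * (descPochhammer ℝ (j + 1)).eval α * (j + (1 - α)) by
      push_cast; ring]
    have : 0 < 1 - α := sub_pos.2 hα₁
    positivity

lemma descPochhammer_eval_ne_zero {α : ℝ} (hα₀ : 0 < α) (hα₁ : α < 1) (j : ℕ) :
    (descPochhammer ℝ (j + 1)).eval α ≠ 0 :=
  right_ne_zero_of_mul (neg_one_pow_mul_descPochhammer_eval_pos hα₀ hα₁ j).ne'

end FiniteDifferences

section LogPartition

lemma isEquivalent_fwdDiff_iter_log_hardyRamanujanMain (j : ℕ) :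
    Δ_[1] ^[j + 1] (fun y ↦ Real.log (hardyRamanujanMain y)) ~[atTop] fun y ↦
      hardyRamanujanRate * (descPochhammer ℝ (j + 1)).eval (1 / 2) *
        y ^ (1 / 2 - (j + 1 : ℕ) : ℝ) := by
  have hlog : (fun y ↦ Real.log (hardyRamanujanMain y)) =ᶠ[atTop]
      hardyRamanujanRate • (fun y : ℝ ↦ y ^ (1 / 2 : ℝ)) + ((-1 : ℝ) • Real.log +
        ((fun y ↦ Real.log (1 - hardyRamanujanRate⁻¹ * y ^ (-(1 / 2) : ℝ))) +
          fun _ ↦ -Real.log (4 * √3))) := by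
    filter_upwards [eventually_gt_atTop 0, eventually_lt_hardyRamanujanRate_mul_sqrt 1]
      with y hy hrate
    simp only [log_hardyRamanujanMain hy hrate, Pi.add_apply, Pi.smul_apply, smul_eq_mul]
    ring
  have hshift : Tendsto (fun x : ℝ ↦ x + 1) atTop atTop :=
    tendsto_atTop_add_const_right _ _ tendsto_id
  have hdiff := eventuallyEq_fwdDiff_iter hshift hlog (j + 1)
  have hconst : Δ_[(1 : ℝ)] ^[j + 1] (fun _ ↦ -Real.log (4 * √3)) = fun _ ↦ 0 := by
    rw [Function.iterate_succ_apply, fwdDiff_const]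
    exact Function.iterate_fixed (fwdDiff_const _ _) j
  simp only [fwdDiff_iter_add, fwdDiff_iter_const_smul, hconst] at hdiff
  have hcoeff : hardyRamanujanRate * (descPochhammer ℝ (j + 1)).eval (1 / 2) ≠ 0 :=
    mul_ne_zero hardyRamanujanRate_pos.ne'
      (descPochhammer_eval_ne_zero one_half_pos one_half_lt_one j)
  have hsqrt : hardyRamanujanRate • Δ_[(1 : ℝ)] ^[j + 1] (fun y : ℝ ↦ y ^ (1 / 2 : ℝ)) ~[atTop]
      fun y ↦ hardyRamanujanRate * (descPochhammer ℝ (j + 1)).eval (1 / 2) *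
        y ^ (1 / 2 - (j + 1 : ℕ) : ℝ) := by
    simpa only [Pi.smul_def, smul_eq_mul, mul_assoc] using
      (IsEquivalent.refl (u := fun _ ↦ hardyRamanujanRate)).smul
        (isEquivalent_fwdDiff_iter_rpow (1 / 2) (j + 1))
  have hlog_term : ((-1 : ℝ) • Δ_[(1 : ℝ)] ^[j + 1] Real.log) =o[atTop]
      fun y ↦ y ^ (1 / 2 - (j + 1 : ℕ) : ℝ) :=
    ((isEquivalent_fwdDiff_iter_log j).isBigO.trans_isLittleO
      ((isLittleO_rpow_rpow_atTop (by push_cast; linarith)).const_mul_left _)).const_smul_left _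
  have hlog_one_sub_term :=
    (isBigO_fwdDiff_iter_log_one_sub hardyRamanujanRate⁻¹ (j + 1)).trans_isLittleO
      (isLittleO_rpow_rpow_atTop (γ := 1 / 2 - (j + 1 : ℕ)) (by linarith))
  refine (hsqrt.add_isLittleO ((isLittleO_const_mul_right_iff hcoeff).2
    (hlog_term.add (hlog_one_sub_term.add (isLittleO_zero _ _))))).congr_left hdiff.symm

lemma isEquivalent_fwdDiff_iter_log_card_partition (j : ℕ) :
    Δ_[1] ^[j + 1] (fun n : ℕ ↦ Real.log (Fintype.card (Nat.Partition n))) ~[atTop] fun n : ℕ ↦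
      hardyRamanujanRate * (descPochhammer ℝ (j + 1)).eval (1 / 2) *
        (n : ℝ) ^ (1 / 2 - (j + 1 : ℕ) : ℝ) := by
  set coeff := hardyRamanujanRate * (descPochhammer ℝ (j + 1)).eval (1 / 2)
  have hcoeff : coeff ≠ 0 := mul_ne_zero hardyRamanujanRate_pos.ne'
    (descPochhammer_eval_ne_zero one_half_pos one_half_lt_one j)
  set error : ℕ → ℝ := fun n ↦ Real.log (Fintype.card (Nat.Partition n)) -
    Real.log (hardyRamanujanMain (n - 1 / 24))
  have hsplit : (fun n : ℕ ↦ Real.log (Fintype.card (Nat.Partition n))) =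
      (fun y ↦ Real.log (hardyRamanujanMain y)) ∘ (fun n : ℕ ↦ (n : ℝ) - 1 / 24) + error :=
    funext fun n ↦ (add_sub_cancel _ _).symm
  have hmain : Δ_[1] ^[j + 1] ((fun y ↦ Real.log (hardyRamanujanMain y)) ∘
      fun n : ℕ ↦ (n : ℝ) - 1 / 24) ~[atTop]
        fun n ↦ coeff * (n : ℝ) ^ (1 / 2 - (j + 1 : ℕ) : ℝ) := by
    rw [fwdDiff_iter_comp (h' := 1) fun n ↦ by push_cast; ring]
    exact ((isEquivalent_fwdDiff_iter_log_hardyRamanujanMain j).comp_tendsto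
      (tendsto_natCast_sub_atTop _)).trans
        (IsEquivalent.refl.mul (isEquivalent_natCast_sub_rpow _ _))
  have herror : Δ_[1] ^[j + 1] error =O[atTop] fun n ↦ (n : ℝ) ^ (-(j + 1 : ℕ) : ℝ) := by
    refine isBigO_fwdDiff_iter (tendsto_add_atTop_nat 1) ?_
      (isBigO_log_card_partition_sub_log_hardyRamanujanMain (neg_lt_zero.2 (by positivity))) _
    simpa [Function.comp_def] using
      ((isEquivalent_rpow_add_const 1 _).comp_tendsto tendsto_natCast_atTop_atTop).isBigO
  rw [hsplit, fwdDiff_iter_add]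
  exact hmain.add_isLittleO ((isLittleO_const_mul_right_iff hcoeff).2 (herror.trans_isLittleO
    ((isLittleO_rpow_rpow_atTop (by linarith)).comp_tendsto tendsto_natCast_atTop_atTop)))

end LogPartition

theorem stmt_18 (p : ℕ → ℕ) (hp : ∀ n, p n = Fintype.card (Nat.Partition n))
    (r : ℕ) (hr : 1 ≤ r) :
    ∃ N : ℕ, 0 < N ∧ ∀ n : ℕ, N ≤ n →
      0 < (-1 : ℝ) ^ (r - 1) *
        ((fun g : ℕ → ℝ => fun m => g (m + 1) - g m)^[r] (fun m => Real.log (p m)) n) := by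
  obtain ⟨j, rfl⟩ := Nat.exists_eq_add_of_le' hr
  obtain rfl : p = fun n ↦ Fintype.card (Nat.Partition n) := funext hp
  have hequiv := (IsEquivalent.refl (u := fun _ : ℕ ↦ (-1 : ℝ) ^ j)).mul
    (isEquivalent_fwdDiff_iter_log_card_partition j)
  have hmain_pos : ∀ᶠ n : ℕ in atTop, 0 < (-1 : ℝ) ^ j * (hardyRamanujanRate *
      (descPochhammer ℝ (j + 1)).eval (1 / 2) * (n : ℝ) ^ (1 / 2 - (j + 1 : ℕ) : ℝ)) := by
    filter_upwards [eventually_gt_atTop 0] with n hn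
    have hsign := neg_one_pow_mul_descPochhammer_eval_pos one_half_pos one_half_lt_one j
    have hpow : 0 < (n : ℝ) ^ (1 / 2 - (j + 1 : ℕ) : ℝ) := by positivity
    exact (mul_pos (mul_pos hardyRamanujanRate_pos hsign) hpow).trans_eq (by ring)
  obtain ⟨N, hN⟩ := eventually_atTop.1 (hequiv.eventually_pos hmain_pos)
  exact ⟨N + 1, N.succ_pos, fun n hn ↦ hN n (by omega)⟩
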